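/- Let p > q and θ ∈ (0, π/2). If h is a positive convex solution of det(∇²h + hσ) = f·h^{p-1}(h² + |∇h|²)^{(n+1-q)/2} in C_θ with ∇_μ h = cot θ · h on ∂C_θ, where f > 0 is smooth on C_θ, then the global Hessian bound reduces to the boundary double normal estimate: max_{C_θ} |∇²h| ≤ C · max_{∂C_θ} |∇²h(μ, μ)| + C, where C depends only on n, p, q, min_{C_θ} f, min_{C_θ} h, ‖f‖_{C²(C_θ)} and ‖h‖_{C⁰(C_θ)}. -/

import Mathlib

/- Formalization of statements from "The L_p dual Minkowski problem for capillary
hypersurfaces".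

We work in the ambient space `ℝ^{n+1}`.  The spherical cap `C_θ` is the part of the unit
sphere centred at `cos θ • e` (where `e = -E_{n+1}`) lying in the closed upper half-space.
Functions on `C_θ` are represented by ambient functions `h : Euc n → ℝ`; the intrinsic
(round-metric) gradient `∇h` and Hessian `∇²h` of the restriction of `h` to `C_θ` are
expressed through ambient derivatives (for tangential arguments these expressions depend
only on the restriction of `h` to the cap).  The quantity `det(∇²h + hσ)` is encoded as the
determinant of the endomorphism of `ℝ^{n+1}` acting as `∇²h + hσ` on the tangent space of
the cap and as the identity on the normal line. -/

open Real Set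
open scoped RealInnerProductSpace

noncomputable section

/-- Ambient Euclidean space `ℝ^{n+1}`. -/
abbrev Euc (n : ℕ) : Type := EuclideanSpace ℝ (Fin (n + 1))

/-- The unit vector `e = -E_{n+1}`. -/
def eVec (n : ℕ) : Euc n := -(EuclideanSpace.single (Fin.last n) (1 : ℝ))

/-- `ν(ξ) = ξ - cos θ • e`, the unit normal (at `ξ`) of the sphere containing the cap `C_θ`. -/
def sphNormal (n : ℕ) (θ : ℝ) (ξ : Euc n) : Euc n := ξ - Real.cos θ • eVec n

/-- The spherical cap `C_θ = {ξ ∈ closure ℝ^{n+1}_+ : |ξ - cos θ • e| = 1}`. -/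
def cap (n : ℕ) (θ : ℝ) : Set (Euc n) :=
  {ξ | 0 ≤ ξ (Fin.last n) ∧ ‖sphNormal n θ ξ‖ = 1}

/-- The boundary `∂C_θ`. -/
def capBdry (n : ℕ) (θ : ℝ) : Set (Euc n) :=
  {ξ | ξ (Fin.last n) = 0 ∧ ‖sphNormal n θ ξ‖ = 1}

/-- The outward unit conormal `μ` of `∂C_θ` in `C_θ` (at boundary points). -/
def conormal (n : ℕ) (θ : ℝ) (ξ : Euc n) : Euc n :=
  Real.cot θ • ξ + Real.sin θ • eVec n

/-- Orthogonal projection of `ℝ^{n+1}` onto the tangent space of the cap at `ξ`. -/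
def tproj (n : ℕ) (θ : ℝ) (ξ : Euc n) : Euc n →L[ℝ] Euc n :=
  ContinuousLinearMap.id ℝ (Euc n) - (innerSL ℝ (sphNormal n θ ξ)).smulRight (sphNormal n θ ξ)

/-- `X` is tangent to the cap at `ξ`. -/
def IsTangent (n : ℕ) (θ : ℝ) (ξ X : Euc n) : Prop :=
  ⟪X, sphNormal n θ ξ⟫ = 0

/-- Intrinsic (round-metric) gradient `∇h` of `h` on the cap. -/
def sgrad (n : ℕ) (θ : ℝ) (h : Euc n → ℝ) (ξ : Euc n) : Euc n :=
  tproj n θ ξ (gradient h ξ)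

/-- Intrinsic (round-metric) Hessian `∇²h(X,Y)` of `h` on the cap (tangential arguments). -/
def shess (n : ℕ) (θ : ℝ) (h : Euc n → ℝ) (ξ X Y : Euc n) : ℝ :=
  ⟪(fderiv ℝ (gradient h) ξ) X, Y⟫ - ⟪gradient h ξ, sphNormal n θ ξ⟫ * ⟪X, Y⟫

/-- Endomorphism representing the intrinsic Hessian `∇²h` on tangent vectors
(and vanishing on the normal line). -/
def thessOp (n : ℕ) (θ : ℝ) (h : Euc n → ℝ) (ξ : Euc n) : Euc n →L[ℝ] Euc n :=
  ((tproj n θ ξ).comp ((fderiv ℝ (gradient h) ξ).comp (tproj n θ ξ)))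
    - ⟪gradient h ξ, sphNormal n θ ξ⟫ • tproj n θ ξ

/-- Rank-one projection onto the normal direction at `ξ`. -/
def normalPart (n : ℕ) (θ : ℝ) (ξ : Euc n) : Euc n →L[ℝ] Euc n :=
  (innerSL ℝ (sphNormal n θ ξ)).smulRight (sphNormal n θ ξ)

/-- Endomorphism acting as `∇²h + hσ` on the tangent space and as the identity on the
normal line. -/
def hessOp (n : ℕ) (θ : ℝ) (h : Euc n → ℝ) (ξ : Euc n) : Euc n →L[ℝ] Euc n :=
  thessOp n θ h ξ + h ξ • tproj n θ ξ + normalPart n θ ξ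

/-- `det(∇²h + hσ)` at `ξ`. -/
def sdet (n : ℕ) (θ : ℝ) (h : Euc n → ℝ) (ξ : Euc n) : ℝ :=
  LinearMap.det (hessOp n θ h ξ).toLinearMap

/-- `h > 0` on the cap. -/
def PosOnCap (n : ℕ) (θ : ℝ) (h : Euc n → ℝ) : Prop := ∀ ξ ∈ cap n θ, 0 < h ξ

/-- Convexity of a solution: `∇²h + hσ > 0` on the cap. -/
def IsConvexSol (n : ℕ) (θ : ℝ) (h : Euc n → ℝ) : Prop :=
  ∀ ξ ∈ cap n θ, ∀ X : Euc n, IsTangent n θ ξ X → X ≠ 0 →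
    0 < shess n θ h ξ X X + h ξ * ⟪X, X⟫

/-- The right-hand side `f·h^{p-1}·(h² + |∇h|²)^{(n+1-q)/2}`. -/
def eqRHS (n : ℕ) (θ p q : ℝ) (f h : Euc n → ℝ) (ξ : Euc n) : ℝ :=
  f ξ * h ξ ^ (p - 1) * (h ξ ^ 2 + ‖sgrad n θ h ξ‖ ^ 2) ^ (((n : ℝ) + 1 - q) / 2)

/-- `h` solves `det(∇²h + hσ) = f·h^{p-1}(h² + |∇h|²)^{(n+1-q)/2}` in `C_θ`. -/
def SolvesEq (n : ℕ) (θ p q : ℝ) (f h : Euc n → ℝ) : Prop :=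
  ∀ ξ ∈ cap n θ, sdet n θ h ξ = eqRHS n θ p q f h ξ

/-- Robin boundary condition `∇_μ h = cot θ · h` on `∂C_θ`. -/
def RobinBC (n : ℕ) (θ : ℝ) (h : Euc n → ℝ) : Prop :=
  ∀ ξ ∈ capBdry n θ, ⟪sgrad n θ h ξ, conormal n θ ξ⟫ = Real.cot θ * h ξ

/-- `l(ξ) = sin²θ + cos θ·⟨ξ, e⟩`. -/
def lFun (n : ℕ) (θ : ℝ) (ξ : Euc n) : ℝ :=
  Real.sin θ ^ 2 + Real.cos θ * ⟪ξ, eVec n⟫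

/-- `‖f‖_{C⁰(C_θ)} ≤ K`. -/
def CZeroNormLe (n : ℕ) (θ : ℝ) (f : Euc n → ℝ) (K : ℝ) : Prop :=
  ∀ ξ ∈ cap n θ, |f ξ| ≤ K

/-- `‖f‖_{C¹(C_θ)} ≤ K`. -/
def COneNormLe (n : ℕ) (θ : ℝ) (f : Euc n → ℝ) (K : ℝ) : Prop :=
  CZeroNormLe n θ f K ∧ ∀ ξ ∈ cap n θ, ‖sgrad n θ f ξ‖ ≤ K

/-- `‖f‖_{C²(C_θ)} ≤ K`. -/
def CTwoNormLe (n : ℕ) (θ : ℝ) (f : Euc n → ℝ) (K : ℝ) : Prop :=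
  COneNormLe n θ f K ∧
    ∀ ξ ∈ cap n θ, ∀ X Y : Euc n, IsTangent n θ ξ X → IsTangent n θ ξ Y →
      |shess n θ f ξ X Y| ≤ K * ‖X‖ * ‖Y‖

/-- The linearized operator `L_h(γ)` of the equation `𝒢(∇²h,h) = 𝒥₁(∇h,h)` at `h`:
the derivative at `ε = 0` of `𝒢 - 𝒥₁` along the variation `h_ε = h·e^{εγ}`
(cf. equation (5.4) of the paper, which is exactly this derivative). -/
def linOp (n : ℕ) (θ p q : ℝ) (f h γ : Euc n → ℝ) (ξ : Euc n) : ℝ :=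
  deriv (fun ε : ℝ =>
    sdet n θ (fun x => h x * Real.exp (ε * γ x)) ξ
      - eqRHS n θ p q f (fun x => h x * Real.exp (ε * γ x)) ξ) 0

/-- Endomorphism acting as `l·∇²u + cos θ·(∇u ⊗ e^T + e^T ⊗ ∇u) + uσ` on the tangent space
and as the identity on the normal line. -/
def capillaryOp (n : ℕ) (θ : ℝ) (u : Euc n → ℝ) (ξ : Euc n) : Euc n →L[ℝ] Euc n :=
  lFun n θ ξ • thessOp n θ u ξ
    + Real.cos θ • ((innerSL ℝ (sgrad n θ u ξ)).smulRight (tproj n θ ξ (eVec n))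
        + (innerSL ℝ (tproj n θ ξ (eVec n))).smulRight (sgrad n θ u ξ))
    + u ξ • tproj n θ ξ + normalPart n θ ξ

/-- Endomorphism acting as `∇²v + ∇v ⊗ ∇v + σ` on the tangent space and as the identity on
the normal line. -/
def logOp (n : ℕ) (θ : ℝ) (v : Euc n → ℝ) (ξ : Euc n) : Euc n →L[ℝ] Euc n :=
  thessOp n θ v ξ + (innerSL ℝ (sgrad n θ v ξ)).smulRight (sgrad n θ v ξ)
    + tproj n θ ξ + normalPart n θ ξ

/-- Geodesic distance on `C_θ` from `ξ` to the top point `N = (0,…,0,1-cos θ)`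
(for `θ ∈ (0,π/2)` the cap is geodesically convex, so this is `arccos ⟨ν(ξ), ν(N)⟩`). -/
def distToTop (n : ℕ) (θ : ℝ) (ξ : Euc n) : ℝ :=
  Real.arccos (ξ (Fin.last n) + Real.cos θ)

/-- The function `d := d_N²/(2θ)`. -/
def dCap (n : ℕ) (θ : ℝ) (ξ : Euc n) : ℝ := distToTop n θ ξ ^ 2 / (2 * θ)

open Filter Topology in
/-- second-order jet at 0 -/
def Jet (f : ℝ → ℝ) (b c : ℝ) : Prop :=
  ∃ f' : ℝ → ℝ, (∀ᶠ t in 𝓝 (0:ℝ), HasDerivAt f (f' t) t) ∧ f' 0 = b ∧ HasDerivAt f' c 0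

namespace Jet
open Filter Topology

lemma hasDerivAt {f : ℝ → ℝ} {b c : ℝ} (h : Jet f b c) : HasDerivAt f b 0 := by
  obtain ⟨f', h1, h2, h3⟩ := h
  exact h2 ▸ h1.self_of_nhds

lemma congr_val {f : ℝ → ℝ} {b c b' c' : ℝ} (h : Jet f b c) (hb : b = b') (hc : c = c') :
    Jet f b' c' := by subst hb hc; exact h

lemma congr_ev {f g : ℝ → ℝ} {b c : ℝ} (h : Jet f b c) (hfg : f =ᶠ[𝓝 0] g) : Jet g b c := by
  obtain ⟨f', h1, h2, h3⟩ := h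
  refine ⟨f', ?_, h2, h3⟩
  filter_upwards [h1, hfg.eventually_nhds] with t ht hg
  exact ht.congr_of_eventuallyEq (Filter.EventuallyEq.symm hg)

lemma const (a : ℝ) : Jet (fun _ => a) 0 0 :=
  ⟨fun _ => 0, Eventually.of_forall fun t => hasDerivAt_const t a, rfl, hasDerivAt_const _ _⟩

lemma affine (a b : ℝ) : Jet (fun t => a + t * b) b 0 :=
  ⟨fun _ => b, Eventually.of_forall fun t => by
    simpa using ((hasDerivAt_id t).mul_const b).const_add a, rfl, hasDerivAt_const _ _⟩

lemma add {f g : ℝ → ℝ} {b c b' c' : ℝ} (hf : Jet f b c) (hg : Jet g b' c') :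
    Jet (fun t => f t + g t) (b + b') (c + c') := by
  obtain ⟨f', h1, h2, h3⟩ := hf
  obtain ⟨g', k1, k2, k3⟩ := hg
  refine ⟨fun t => f' t + g' t, ?_, by simp [h2, k2], h3.add k3⟩
  filter_upwards [h1, k1] with t ht kt
  exact ht.add kt

lemma mul {f g : ℝ → ℝ} {b c b' c' : ℝ} (hf : Jet f b c) (hg : Jet g b' c') :
    Jet (fun t => f t * g t) (b * g 0 + f 0 * b') (c * g 0 + 2 * (b * b') + f 0 * c') := by
  have hf0 := hf.hasDerivAt
  have hg0 := hg.hasDerivAt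
  obtain ⟨f', h1, h2, h3⟩ := hf
  obtain ⟨g', k1, k2, k3⟩ := hg
  refine ⟨fun t => f' t * g t + f t * g' t, ?_, by simp [h2, k2], ?_⟩
  · filter_upwards [h1, k1] with t ht kt
    exact ht.mul kt
  · refine ((h3.mul hg0).add (hf0.mul k3)).congr_deriv ?_
    rw [h2, k2]; ring

lemma const_mul {f : ℝ → ℝ} {b c : ℝ} (a : ℝ) (hf : Jet f b c) :
    Jet (fun t => a * f t) (a * b) (a * c) :=
  ((const a).mul hf).congr_val (by ring) (by ring)

lemma sub {f g : ℝ → ℝ} {b c b' c' : ℝ} (hf : Jet f b c) (hg : Jet g b' c') :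
    Jet (fun t => f t - g t) (b - b') (c - c') := by
  have := hf.add (hg.const_mul (-1))
  refine (this.congr_ev (Eventually.of_forall fun t => ?_)).congr_val ?_ ?_
  · ring
  · ring
  · ring

lemma sum {ι : Type*} (s : Finset ι) {f : ι → ℝ → ℝ} {b c : ι → ℝ}
    (hf : ∀ i ∈ s, Jet (f i) (b i) (c i)) :
    Jet (fun t => ∑ i ∈ s, f i t) (∑ i ∈ s, b i) (∑ i ∈ s, c i) := by
  classical
  induction s using Finset.induction_on with
  | empty => simpa using const 0
  | insert a s ha ih =>
    simp only [Finset.sum_insert ha]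
    exact (hf a (by simp)).add (ih fun i hi => hf i (by simp [hi]))

lemma exp {f : ℝ → ℝ} {b c : ℝ} (hf : Jet f b c) :
    Jet (fun t => Real.exp (f t)) (Real.exp (f 0) * b) (Real.exp (f 0) * (b ^ 2 + c)) := by
  have hf0 := hf.hasDerivAt
  obtain ⟨f', h1, h2, h3⟩ := hf
  refine ⟨fun t => Real.exp (f t) * f' t, ?_, by simp [h2], ?_⟩
  · filter_upwards [h1] with t ht
    exact ht.exp
  · refine (hf0.exp.mul h3).congr_deriv ?_
    rw [h2]; ring

lemma log {f : ℝ → ℝ} {b c : ℝ} (hf : Jet f b c) (h0 : 0 < f 0) :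
    Jet (fun t => Real.log (f t)) (b / f 0) (c / f 0 - b ^ 2 / f 0 ^ 2) := by
  have hf0 := hf.hasDerivAt
  obtain ⟨f', h1, h2, h3⟩ := hf
  refine ⟨fun t => f' t / f t, ?_, by simp [h2], ?_⟩
  · filter_upwards [h1, hf0.continuousAt.eventually (lt_mem_nhds h0)] with t ht h
    exact ht.log h.ne'
  · refine (h3.div hf0 h0.ne').congr_deriv ?_
    rw [h2]; field_simp

lemma of_isLocalMin {f : ℝ → ℝ} {b c : ℝ} (hf : Jet f b c) (h : IsLocalMin f 0) :
    b = 0 ∧ 0 ≤ c := by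
  have hb : b = 0 := h.hasDerivAt_eq_zero hf.hasDerivAt
  refine ⟨hb, ?_⟩
  by_contra hc
  push Not at hc
  have hcont := hf.hasDerivAt.continuousAt
  obtain ⟨f', h1, h2, h3⟩ := hf
  have hd : deriv f =ᶠ[𝓝 0] f' := by
    filter_upwards [h1] with t ht using ht.deriv
  have hmax : IsLocalMax f 0 := by
    apply isLocalMax_of_deriv_deriv_neg _ _ hcont
    · rw [hd.deriv_eq, h3.deriv]; exact hc
    · rw [hd.self_of_nhds, h2, hb]
  have hconst : f =ᶠ[𝓝 0] fun _ => f 0 := by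
    filter_upwards [h, hmax] with t ht ht' using le_antisymm ht' ht
  have : deriv f =ᶠ[𝓝 0] fun _ => 0 := by
    have := hconst.deriv
    simpa using this
  have h4 : f' =ᶠ[𝓝 0] fun _ => 0 := hd.symm.trans this
  have : c = 0 := by rw [← h3.deriv, h4.deriv_eq]; simp
  linarith

lemma of_isLocalMax {f : ℝ → ℝ} {b c : ℝ} (hf : Jet f b c) (h : IsLocalMax f 0) :
    b = 0 ∧ c ≤ 0 := by
  have := (hf.const_mul (-1)).of_isLocalMin (by
    filter_upwards [h] with t ht
    linarith)
  constructor <;> linarith [this.1, this.2]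

end Jet

section dd
variable {E : Type*} [NormedAddCommGroup E] [NormedSpace ℝ E]

/-- directional derivative -/
def dd (v : E) (f : E → ℝ) : E → ℝ := fun y => fderiv ℝ f y v

lemma dd_contDiff {f : E → ℝ} (hf : ContDiff ℝ (⊤ : ℕ∞) f) (v : E) :
    ContDiff ℝ (⊤ : ℕ∞) (dd v f) := by
  have : ContDiff ℝ (⊤ : ℕ∞) (fderiv ℝ f) := hf.fderiv_right (by simp)
  exact this.clm_apply contDiff_const

lemma smooth_diff {f : E → ℝ} (hf : ContDiff ℝ (⊤ : ℕ∞) f) : Differentiable ℝ f :=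
  hf.differentiable (by simp)

lemma dd_add (v w : E) (f : E → ℝ) (y : E) : dd (v + w) f y = dd v f y + dd w f y := by
  simp [dd]

lemma dd_smul (a : ℝ) (v : E) (f : E → ℝ) (y : E) : dd (a • v) f y = a * dd v f y := by
  simp [dd]

lemma dd_dd_eq {f : E → ℝ} (hf : ContDiff ℝ (⊤ : ℕ∞) f) (v w y : E) :
    dd w (dd v f) y = fderiv ℝ (fderiv ℝ f) y w v := by
  have h1 : DifferentiableAt ℝ (fderiv ℝ f) y :=
    (hf.fderiv_right (m := (⊤ : ℕ∞)) (by simp)).differentiable (by simp) y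
  unfold dd
  rw [fderiv_clm_apply h1 (differentiableAt_const v)]
  simp

lemma dd_comm {f : E → ℝ} (hf : ContDiff ℝ (⊤ : ℕ∞) f) (v w : E) :
    dd w (dd v f) = dd v (dd w f) := by
  funext y
  rw [dd_dd_eq hf, dd_dd_eq hf]
  have := (hf.contDiffAt (x := y)).isSymmSndFDerivAt (by
    simp only [minSmoothness_of_isRCLikeNormedField]
    exact WithTop.coe_le_coe.2 (le_top : (2 : ℕ∞) ≤ ⊤))
  exact this w v

lemma line_hasDerivAt {f : E → ℝ} (hf : Differentiable ℝ f) (y v : E) (t : ℝ) :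
    HasDerivAt (fun t : ℝ => f (y + t • v)) (dd v f (y + t • v)) t := by
  have h1 : HasDerivAt (fun t : ℝ => y + t • v) v t := by
    simpa using ((hasDerivAt_id t).smul_const v).const_add y
  exact (hf (y + t • v)).hasFDerivAt.comp_hasDerivAt t h1

lemma line_jet {f : E → ℝ} (hf : ContDiff ℝ (⊤ : ℕ∞) f) (y v : E) :
    Jet (fun t : ℝ => f (y + t • v)) (dd v f y) (dd v (dd v f) y) := by
  refine ⟨fun t => dd v f (y + t • v), Filter.Eventually.of_forall fun t =>
    line_hasDerivAt (smooth_diff hf) y v t, by simp, ?_⟩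
  have := line_hasDerivAt (smooth_diff (dd_contDiff hf v)) y v 0
  simpa using this

end dd

open Matrix in
lemma psd_det_le {ι : Type*} [Fintype ι] [DecidableEq ι] {M : Matrix ι ι ℝ} (h : M.PosSemidef) :
    M.det ≤ Real.exp (M.trace - Fintype.card ι) := by
  have h1 := h.isHermitian.det_eq_prod_eigenvalues
  have h2 := h.isHermitian.trace_eq_sum_eigenvalues
  simp only [RCLike.ofReal_real_eq_id, id] at h1 h2
  rw [h1, h2]
  have : (∑ i, h.isHermitian.eigenvalues i - (Fintype.card ι : ℝ))
      = ∑ i, (h.isHermitian.eigenvalues i - 1) := by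
    simp [Finset.sum_sub_distrib]
  rw [this, Real.exp_sum]
  apply Finset.prod_le_prod
  · intro i _; exact h.eigenvalues_nonneg i
  · intro i _
    have := Real.add_one_le_exp (h.isHermitian.eigenvalues i - 1)
    linarith

section minprin
open Matrix Filter Topology
variable {ι : Type*} [Fintype ι] [DecidableEq ι]

/-- shear matrix -/
def shearM (k : ι) (z d : ι → ℝ) (t : ℝ) : Matrix ι ι ℝ :=
  (1 + replicateCol Unit (t • z) * replicateRow Unit (Pi.single k (1:ℝ))) * diagonal d

lemma shearM_det (k : ι) (z d : ι → ℝ) (t : ℝ) :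
    (shearM k z d t).det = (1 + t * z k) * ∏ a, d a := by
  unfold shearM
  rw [det_mul, det_one_add_replicateCol_mul_replicateRow, det_diagonal]
  simp

lemma shearM_apply (k : ι) (z d : ι → ℝ) (t : ℝ) (b a : ι) :
    shearM k z d t b a = ((if b = a then 1 else 0) + t * z b * (if a = k then 1 else 0)) * d a := by
  unfold shearM
  rw [mul_diagonal]
  simp [Matrix.mul_apply, Matrix.one_apply, Pi.single_apply]

lemma shear_trace (k : ι) (z d : ι → ℝ) (t : ℝ) (H : Matrix ι ι ℝ) :
    ((shearM k z d t)ᴴ * H * shearM k z d t).trace =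
      ∑ a, d a ^ 2 * H a a + d k ^ 2 * (t * ∑ b, z b * (H b k + H k b)
        + t ^ 2 * ∑ b, ∑ c, z b * z c * H b c) := by
  have key : ∀ a, ((shearM k z d t)ᴴ * H * shearM k z d t) a a =
      d a ^ 2 * H a a + if a = k then d k ^ 2 * (t * ∑ b, z b * (H b k + H k b)
        + t ^ 2 * ∑ b, ∑ c, z b * z c * H b c) else 0 := by
    intro a
    simp only [Matrix.mul_apply, conjTranspose_apply, shearM_apply, star_trivial]
    by_cases h : a = k
    · subst h
      simp only [if_true, mul_one]
      have e1 : ∀ x, (∑ x_1, ((if x_1 = a then (1:ℝ) else 0) + t * z x_1) * d a * H x_1 x) =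
          d a * H a x + d a * t * ∑ b, z b * H b x := by
        intro x
        rw [Finset.mul_sum]
        have : ∀ b, ((if b = a then (1:ℝ) else 0) + t * z b) * d a * H b x =
            (if b = a then d a * H a x else 0) + d a * t * (z b * H b x) := by
          intro b; split_ifs with h
          · subst h; ring
          · ring
        simp_rw [this, Finset.sum_add_distrib]; simp
      simp_rw [e1]
      have e2 : ∀ b, (d a * H a b + d a * t * ∑ c, z c * H c b) *
            (((if b = a then (1:ℝ) else 0) + t * z b) * d a) =
          (if b = a then d a ^ 2 * H a a + d a ^ 2 * t * ∑ c, z c * H c a else 0)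
          + d a ^ 2 * t * (z b * H a b) + d a ^ 2 * t ^ 2 * ∑ c, z b * z c * H c b := by
        intro b
        have : ∑ c, z b * z c * H c b = z b * ∑ c, z c * H c b := by
          rw [Finset.mul_sum]; exact Finset.sum_congr rfl fun _ _ => by ring
        rw [this]
        split_ifs with h
        · subst h; ring
        · ring
      simp_rw [e2, Finset.sum_add_distrib]
      simp only [Finset.sum_ite_eq', Finset.mem_univ, if_true, ← Finset.mul_sum]
      have e3 : ∑ b, z b * (H b a + H a b) = ∑ b, z b * H b a + ∑ b, z b * H a b := by
        rw [← Finset.sum_add_distrib]; exact Finset.sum_congr rfl fun _ _ => by ring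
      have e4 : ∑ b, ∑ c, z b * z c * H b c = ∑ b, ∑ c, z b * z c * H c b := by
        rw [Finset.sum_comm]
        exact Finset.sum_congr rfl fun _ _ => Finset.sum_congr rfl fun _ _ => by ring
      rw [e3, e4]; 
      simp only [Finset.mul_sum]
      simp only [mul_add, ← add_assoc, Finset.mul_sum]
      ring_nf
    · simp [h]
      ring
  unfold Matrix.trace
  simp only [diag_apply, key, Finset.sum_add_distrib]
  simp

variable {E : Type*} [NormedAddCommGroup E] [NormedSpace ℝ E]

/-- Hessian matrix in a family of vectors -/
def hessM (u : E → ℝ) (v : ι → E) (y : E) : Matrix ι ι ℝ :=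
  Matrix.of fun a b => dd (v a) (dd (v b) u) y

lemma minprin {u : E → ℝ} (hu : ContDiff ℝ (⊤ : ℕ∞) u) (y0 : E) (v : ι → E) (lam : ι → ℝ)
    (hlam : ∀ a, 0 < lam a)
    (hdiag : ∀ a b, dd (v a) (dd (v b) u) y0 = if a = b then lam a else 0)
    (Γ : E → ℝ)
    (hpsd : ∀ᶠ y in 𝓝 y0, (hessM u v y).PosSemidef)
    (hdet : ∀ᶠ y in 𝓝 y0, (hessM u v y).det = Real.exp (Γ y))
    (k : ι) (z : ι → ℝ) (G1 G2 : ℝ) (hG : Jet (fun t : ℝ => Γ (y0 + t • v k)) G1 G2) :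
    (∑ a, (lam a)⁻¹ * dd (v k) (dd (v a) (dd (v a) u)) y0 = G1) ∧
    G2 ≤ ∑ a, (lam a)⁻¹ * dd (v k) (dd (v k) (dd (v a) (dd (v a) u))) y0
      + (lam k)⁻¹ * (4 * ∑ b, z b * dd (v k) (dd (v b) (dd (v k) u)) y0
          + 2 * ∑ b, z b ^ 2 * lam b) + 2 * z k ^ 2 := by
  set d : ι → ℝ := fun a => Real.sqrt (lam a)⁻¹ with hd
  have hd2 : ∀ a, d a ^ 2 = (lam a)⁻¹ := fun a => Real.sq_sqrt (inv_nonneg.2 (hlam a).le)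
  have hdpos : ∀ a, 0 < d a := fun a => Real.sqrt_pos.2 (inv_pos.2 (hlam a))
  set H : ℝ → Matrix ι ι ℝ := fun t => hessM u v (y0 + t • v k) with hH
  have hline : Tendsto (fun t : ℝ => y0 + t • v k) (𝓝 0) (𝓝 y0) := by
    have : Continuous (fun t : ℝ => y0 + t • v k) := by fun_prop
    simpa using this.tendsto 0
  have jH : ∀ a b, Jet (fun t => H t a b) (dd (v k) (dd (v a) (dd (v b) u)) y0)
      (dd (v k) (dd (v k) (dd (v a) (dd (v b) u))) y0) := fun a b =>
    line_jet (dd_contDiff (dd_contDiff hu _) _) y0 (v k)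
  have H0 : ∀ a b, H 0 a b = if a = b then lam a else 0 := by
    intro a b; simp [hH, hessM, hdiag]
  have jT0 := (Jet.sum Finset.univ fun a _ => (jH a a).const_mul (d a ^ 2)).add
      (Jet.const_mul (d k ^ 2)
        (((Jet.affine 0 1).mul (Jet.sum Finset.univ fun b _ =>
            ((jH b k).add (jH k b)).const_mul (z b))).add
          (((Jet.affine 0 1).mul (Jet.affine 0 1)).mul
            (Jet.sum Finset.univ fun b _ => Jet.sum Finset.univ fun c _ =>
              (jH b c).const_mul (z b * z c)))))
  have jT := jT0.congr_ev (g := fun t => ((shearM k z d t)ᴴ * H t * shearM k z d t).trace)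
    (Eventually.of_forall fun t => by
      simp only [shear_trace, zero_add, mul_one]; ring)
  have jL :=
    ((Jet.affine 1 (z k)).log (by norm_num)).const_mul 2
  have jm := (jT.sub jL).sub hG
  have hmin : IsLocalMin (fun t => ((shearM k z d t)ᴴ * H t * shearM k z d t).trace -
      2 * Real.log (1 + t * z k) - Γ (y0 + t • v k)) 0 := by
    have hpos : ∀ᶠ t in 𝓝 (0:ℝ), 0 < 1 + t * z k := by
      have : Continuous (fun t : ℝ => 1 + t * z k) := by fun_prop
      exact this.continuousAt.eventually (lt_mem_nhds (by norm_num))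
    have hP : 0 < ∏ a, d a := Finset.prod_pos fun a _ => hdpos a
    have hG0 : Real.exp (Γ y0) = ∏ a, lam a := by
      rw [← hdet.self_of_nhds]
      have : hessM u v y0 = diagonal lam := by
        ext a b
        rw [hessM, of_apply, hdiag, diagonal_apply]
      rw [this, det_diagonal]
    have hPG : Real.exp (Γ y0) * (∏ a, d a) ^ 2 = 1 := by
      rw [hG0, ← Finset.prod_pow, ← Finset.prod_mul_distrib]
      apply Finset.prod_eq_one
      intro a _
      rw [hd2, mul_inv_cancel₀ (hlam a).ne']
    have hPl : Γ y0 + 2 * Real.log (∏ a, d a) = 0 := by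
      have := congrArg Real.log hPG
      rw [Real.log_mul (Real.exp_pos _).ne' (pow_pos hP 2).ne', Real.log_exp, Real.log_pow] at this
      simpa using this
    filter_upwards [hpos, hline.eventually hpsd, hline.eventually hdet] with t h1 h2 h3
    have h4 := psd_det_le (h2.conjTranspose_mul_mul_same (shearM k z d t))
    rw [det_mul, det_mul, det_conjTranspose, shearM_det, h3, star_trivial] at h4
    have h5 := Real.log_le_log (by positivity) h4
    rw [Real.log_exp, Real.log_mul (by positivity) (by positivity),
      Real.log_mul (by positivity) (by positivity), Real.log_exp,
      Real.log_mul (by positivity) (by positivity)] at h5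
    have h6 : ((shearM k z d 0)ᴴ * H 0 * shearM k z d 0).trace = Fintype.card ι := by
      rw [shear_trace]
      simp [H0, hd2, inv_mul_cancel₀ (hlam _).ne']
    simp only [h6, zero_mul, zero_smul, add_zero, Real.log_one]
    change _ ≤ ((shearM k z d t)ᴴ * hessM u v (y0 + t • v k) * shearM k z d t).trace - _ - _
    linarith
  obtain ⟨h1, h2⟩ := jm.of_isLocalMin hmin
  have s3 : ∀ b, dd (v k) (dd (v k) (dd (v b) u)) y0 = dd (v k) (dd (v b) (dd (v k) u)) y0 := by
    intro b; rw [dd_comm hu]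
  simp only [H0, hd2, zero_add, mul_one, zero_mul, mul_zero, add_zero] at h1 h2
  have e1 : ∑ b, z b * ((if b = k then lam b else 0) + if k = b then lam k else 0)
      = 2 * (z k * lam k) := by
    have : ∀ b, z b * ((if b = k then lam b else 0) + if k = b then lam k else 0) =
       if b = k then 2 * (z k * lam k) else 0 := by
      intro b
      by_cases h : b = k
      · subst h; simp; ring
      · simp [h, Ne.symm h]
    simp [this]
  have e2 : ∑ b, z b * (dd (v k) (dd (v b) (dd (v k) u)) y0 + dd (v k) (dd (v k) (dd (v b) u)) y0)
      = 2 * ∑ b, z b * dd (v k) (dd (v b) (dd (v k) u)) y0 := by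
    rw [Finset.mul_sum]
    exact Finset.sum_congr rfl fun b _ => by rw [s3]; ring
  have e3 : ∑ b, ∑ c, z b * z c * (if b = c then lam b else 0) = ∑ b, z b ^ 2 * lam b := by
    refine Finset.sum_congr rfl fun b _ => ?_
    simp [pow_two]
  rw [e1] at h1
  rw [e2, e3] at h2
  have hk := (hlam k).ne'
  constructor
  · have : (lam k)⁻¹ * (2 * (z k * lam k)) = 2 * z k := by field_simp
    simp only [one_mul] at h1
    rw [this] at h1
    simp at h1
    linarith
  · simp only [one_mul] at h2
    simp at h2
    have : (lam k)⁻¹ * (2 * (2 * ∑ b, z b * dd (v k) (dd (v b) (dd (v k) u)) y0) +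
      2 * ∑ b, z b ^ 2 * lam b) = (lam k)⁻¹ * (4 * ∑ b, z b * dd (v k) (dd (v b) (dd (v k) u)) y0
          + 2 * ∑ b, z b ^ 2 * lam b) := by ring
    linarith

end minprin

section interior
open Matrix Filter Topology
variable {ι : Type*} [Fintype ι] [DecidableEq ι]
variable {E : Type*} [NormedAddCommGroup E] [InnerProductSpace ℝ E]

/-- support-type function `u - y·Du` in a basis -/
def sB (u : E → ℝ) (v : ι → E) (y : E) : ℝ := u y - ∑ b, ⟪v b, y⟫ * dd (v b) u y

/-- `|Du|²` in a basis -/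
def g2B (u : E → ℝ) (v : ι → E) (y : E) : ℝ := ∑ b, dd (v b) u y * dd (v b) u y

lemma interior_ineq {u : E → ℝ} (hu : ContDiff ℝ (⊤ : ℕ∞) u) (y0 : E) (v : OrthonormalBasis ι ℝ E)
    (lam : ι → ℝ) (hlam : ∀ a, 0 < lam a)
    (hdiag : ∀ a b, dd (v a) (dd (v b) u) y0 = if a = b then lam a else 0)
    (Γ0 : E → ℝ) (P γ β a0 : ℝ)
    (hu0 : 0 < u y0) (hV0 : 0 < g2B u v y0 + sB u v y0 * sB u v y0)
    (hpsd : ∀ᶠ y in 𝓝 y0, (hessM u v y).PosSemidef)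
    (hdet : ∀ᶠ y in 𝓝 y0, (hessM u v y).det =
      Real.exp (Γ0 y + (P * Real.log (u y) + γ * Real.log (g2B u v y + sB u v y * sB u v y))))
    (F1 F2 : ι → ℝ) (hF : ∀ b, Jet (fun t : ℝ => Γ0 (y0 + t • v b)) (F1 b) (F2 b))
    (k : ι)
    (hmax : IsLocalMax (fun y => dd (v k) (dd (v k) u) y *
      Real.exp (β * (1 / 2 * g2B u v y + a0 * sB u v y))) y0) :
    F2 k + P * (lam k / u y0 - dd (v k) u y0 ^ 2 / u y0 ^ 2)
      + γ * ((2 * (lam k ^ 2 * (1 + ⟪v k, y0⟫ ^ 2) - sB u v y0 * lam k))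
            / (g2B u v y0 + sB u v y0 * sB u v y0)
          - (2 * (dd (v k) u y0 - sB u v y0 * ⟪v k, y0⟫) * lam k) ^ 2
            / (g2B u v y0 + sB u v y0 * sB u v y0) ^ 2)
      + lam k * (β * (∑ a, lam a - Fintype.card ι * a0
          + ∑ b, (dd (v b) u y0 - a0 * ⟪v b, y0⟫) * (F1 b + P * (dd (v b) u y0 / u y0)))) ≤ 0 := by
  set T : ι → ι → ℝ := fun c b => dd (v c) (dd (v c) (dd (v b) u)) y0 with hT
  set y : ι → ℝ := fun b => ⟪v b, y0⟫ with hy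
  set p : ι → ℝ := fun b => dd (v b) u y0 with hp
  set s := sB u v y0 with hs
  set V := g2B u v y0 + s * s with hV
  have hS1 : ∀ b, ContDiff ℝ (⊤ : ℕ∞) (dd (v b) u) := fun b => dd_contDiff hu _
  have j1 : ∀ c b, Jet (fun t : ℝ => dd (v b) u (y0 + t • v c)) (if c = b then lam c else 0) (T c b) :=
    fun c b => (line_jet (hS1 b) y0 (v c)).congr_val (hdiag c b) rfl
  have j0 : ∀ c, Jet (fun t : ℝ => u (y0 + t • v c)) (p c) (lam c) :=
    fun c => (line_jet hu y0 (v c)).congr_val rfl (by rw [hdiag]; simp)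
  have jy : ∀ c b, Jet (fun t : ℝ => ⟪v b, y0 + t • v c⟫) (if c = b then 1 else 0) 0 := by
    intro c b
    refine (Jet.affine (y b) (if c = b then 1 else 0)).congr_ev (Eventually.of_forall fun t => ?_)
    simp only [inner_add_right, inner_smul_right, hy]
    rw [orthonormal_iff_ite.1 v.orthonormal]
    simp [eq_comm]
  have js : ∀ c, Jet (fun t : ℝ => sB u v (y0 + t • v c)) (-(y c * lam c))
      (-lam c - ∑ b, y b * T c b) := by
    intro c
    refine ((j0 c).sub (Jet.sum Finset.univ fun b _ => (jy c b).mul (j1 c b))).congr_val ?_ ?_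
    · simp [Finset.sum_add_distrib, hy, hp]
    · simp [Finset.sum_add_distrib, hy]; ring
  have jg : ∀ c, Jet (fun t : ℝ => g2B u v (y0 + t • v c)) (2 * (p c * lam c))
      (2 * (lam c ^ 2 + ∑ b, p b * T c b)) := by
    intro c
    refine (Jet.sum Finset.univ fun b _ => (j1 c b).mul (j1 c b)).congr_val ?_ ?_
    · simp [Finset.sum_add_distrib, hp]; ring
    · simp [Finset.sum_add_distrib, ← Finset.mul_sum]
      simp_rw [mul_comm (T c _)]
      ring
  have jV : ∀ c, Jet (fun t : ℝ => g2B u v (y0 + t • v c)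
        + sB u v (y0 + t • v c) * sB u v (y0 + t • v c))
      (2 * (p c - s * y c) * lam c)
      (2 * (lam c ^ 2 * (1 + y c ^ 2) - s * lam c) + 2 * ∑ b, (p b - s * y b) * T c b) := by
    intro c
    refine ((jg c).add ((js c).mul (js c))).congr_val ?_ ?_
    · simp [← hs]; ring
    · simp [← hs, sub_mul, Finset.sum_sub_distrib, mul_assoc, ← Finset.mul_sum]; ring
  have jφ : ∀ c, Jet (fun t : ℝ => β * (1 / 2 * g2B u v (y0 + t • v c) + a0 * sB u v (y0 + t • v c)))
      (β * (p c - a0 * y c) * lam c)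
      (β * (lam c ^ 2 - a0 * lam c + ∑ b, (p b - a0 * y b) * T c b)) := by
    intro c
    refine (Jet.const_mul β (((jg c).const_mul (1/2)).add ((js c).const_mul a0))).congr_val ?_ ?_
    · ring
    · simp only [sub_mul, Finset.sum_sub_distrib, mul_assoc, ← Finset.mul_sum]; ring
  -- jets of Γ
  set Γ1 : ι → ℝ := fun c => F1 c + (P * (p c / u y0) + γ * (2 * (p c - s * y c) * lam c / V)) with hΓ1
  have jΓ : ∀ c, Jet (fun t : ℝ => Γ0 (y0 + t • v c) + (P * Real.log (u (y0 + t • v c)) +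
      γ * Real.log (g2B u v (y0 + t • v c) + sB u v (y0 + t • v c) * sB u v (y0 + t • v c))))
      (Γ1 c)
      (F2 c + (P * (lam c / u y0 - p c ^ 2 / u y0 ^ 2) + γ * ((2 * (lam c ^ 2 * (1 + y c ^ 2) - s * lam c) + 2 * ∑ b, (p b - s * y b) * T c b) / V -
        (2 * (p c - s * y c) * lam c) ^ 2 / V ^ 2))) := by
    intro c
    refine ((hF c).add ((((j0 c).log (by simpa using hu0)).const_mul P).add
      (((jV c).log (by simpa using hV0)).const_mul γ))).congr_val ?_ ?_
    · simp [hΓ1, hV, hs]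
    · simp [hV, hs]
  -- max principle
  have hmaxa : ∀ a, T k a + lam k * (β * (p a - a0 * y a) * lam a) = 0 ∧
      dd (v a) (dd (v a) (dd (v k) (dd (v k) u))) y0 + 2 * (T k a * (β * (p a - a0 * y a) * lam a))
        + lam k * ((β * (p a - a0 * y a) * lam a) ^ 2 +
          β * (lam a ^ 2 - a0 * lam a + ∑ b, (p b - a0 * y b) * T a b)) ≤ 0 := by
    intro a
    have jg2 := line_jet (dd_contDiff (hS1 k) (v k)) y0 (v a)
    have e1 : dd (v a) (dd (v k) (dd (v k) u)) y0 = T k a := by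
      rw [dd_comm (hS1 k), dd_comm hu]
    rw [e1] at jg2
    have jQ := jg2.mul (jφ a).exp
    have hl : IsLocalMax (fun t : ℝ => dd (v k) (dd (v k) u) (y0 + t • v a) *
      Real.exp (β * (1 / 2 * g2B u v (y0 + t • v a) + a0 * sB u v (y0 + t • v a)))) 0 := by
      have hc : ContinuousAt (fun t : ℝ => y0 + t • v a) 0 := by fun_prop
      have hc2 := hc.tendsto
      simp only [zero_smul, add_zero] at hc2
      filter_upwards [hc2.eventually hmax] with t ht
      simpa using ht
    obtain ⟨q1, q2⟩ := jQ.of_isLocalMax hl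
    simp only [zero_smul, add_zero, hdiag, if_true] at q1 q2
    set X := Real.exp (β * (1 / 2 * g2B u v y0 + a0 * sB u v y0)) with hX
    have hXp : 0 < X := Real.exp_pos _
    constructor
    · have : X * (T k a + lam k * (β * (p a - a0 * y a) * lam a)) = 0 := by rw [← q1]; ring
      exact (mul_eq_zero.1 this).resolve_left hXp.ne'
    · by_contra hcon
      push Not at hcon
      have := mul_pos hXp hcon
      refine absurd q2 (not_le.2 (lt_of_lt_of_eq this ?_))
      ring
  -- min principle
  have hJ : ∀ c, ∑ a, (lam a)⁻¹ * T a c = Γ1 c := by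
    intro c
    have := (minprin hu y0 v lam hlam hdiag _ hpsd hdet c 0 _ _ (jΓ c)).1
    rw [← this]
    refine Finset.sum_congr rfl fun a _ => ?_
    rw [hT]; simp only
    rw [dd_comm (hS1 a) (v a) (v c), dd_comm hu (v a) (v c)]
  have hM := (minprin hu y0 v lam hlam hdiag _ hpsd hdet k (fun b => -(1/2) * (T k b / lam b))
    _ _ (jΓ k)).2
  set q := ∑ b, T k b ^ 2 / lam b with hq
  have hM1 : ∑ b, (-(1/2) * (T k b / lam b)) * dd (v k) (dd (v b) (dd (v k) u)) y0 = -(1/2) * q := by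
    rw [hq, Finset.mul_sum]
    refine Finset.sum_congr rfl fun b _ => ?_
    rw [← dd_comm hu]
    simp only [hT]; ring
  have hM2 : ∑ b, (-(1/2) * (T k b / lam b)) ^ 2 * lam b = 1/4 * q := by
    rw [hq, Finset.mul_sum]
    refine Finset.sum_congr rfl fun b _ => ?_
    have := (hlam b).ne'
    field_simp; ring
  rw [hM1, hM2] at hM
  have hqk : (T k k / lam k) ^ 2 ≤ (lam k)⁻¹ * q := by
    have : T k k ^ 2 / lam k ≤ q := by
      apply Finset.single_le_sum (f := fun b => T k b ^ 2 / lam b) _ (Finset.mem_univ k)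
      intro b _; have := hlam b; positivity
    have h2 := mul_le_mul_of_nonneg_left this (inv_nonneg.2 (hlam k).le)
    refine le_trans (le_of_eq ?_) h2
    have := (hlam k).ne'
    field_simp
  have hM' : F2 k + (P * (lam k / u y0 - p k ^ 2 / u y0 ^ 2) + γ * ((2 * (lam k ^ 2 * (1 + y k ^ 2) - s * lam k) + 2 * ∑ b, (p b - s * y b) * T k b) / V -
        (2 * (p k - s * y k) * lam k) ^ 2 / V ^ 2)) ≤
      ∑ a, (lam a)⁻¹ * dd (v a) (dd (v a) (dd (v k) (dd (v k) u))) y0 - (lam k)⁻¹ * q := by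
    have e4 : ∀ a, dd (v k) (dd (v k) (dd (v a) (dd (v a) u))) y0 =
        dd (v a) (dd (v a) (dd (v k) (dd (v k) u))) y0 := by
      intro a
      rw [dd_comm (hS1 a) (v a) (v k), dd_comm hu (v a) (v k),
        dd_comm (dd_contDiff (hS1 k) _) (v a) (v k), dd_comm (hS1 k) (v a) (v k)]
    simp_rw [e4] at hM
    have : (-(1/2) * (T k k / lam k)) ^ 2 = 1/4 * (T k k / lam k) ^ 2 := by ring
    rw [this] at hM
    linarith
  -- sum up the max principle
  have hsum : ∑ a, (lam a)⁻¹ * dd (v a) (dd (v a) (dd (v k) (dd (v k) u))) y0 - (lam k)⁻¹ * q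
      + lam k * (β * (∑ a, lam a - Fintype.card ι * a0 + ∑ b, (p b - a0 * y b) * Γ1 b)) ≤ 0 := by
    have h1 : ∑ a, (lam a)⁻¹ * (dd (v a) (dd (v a) (dd (v k) (dd (v k) u))) y0
        + 2 * (T k a * (β * (p a - a0 * y a) * lam a))
        + lam k * ((β * (p a - a0 * y a) * lam a) ^ 2 +
          β * (lam a ^ 2 - a0 * lam a + ∑ b, (p b - a0 * y b) * T a b))) ≤ 0 :=
      Finset.sum_nonpos fun a _ => mul_nonpos_of_nonneg_of_nonpos (inv_nonneg.2 (hlam a).le)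
        (hmaxa a).2
    refine le_trans (le_of_eq ?_) h1
    have h2 : ∀ a, (lam a)⁻¹ * (dd (v a) (dd (v a) (dd (v k) (dd (v k) u))) y0
        + 2 * (T k a * (β * (p a - a0 * y a) * lam a))
        + lam k * ((β * (p a - a0 * y a) * lam a) ^ 2 +
          β * (lam a ^ 2 - a0 * lam a + ∑ b, (p b - a0 * y b) * T a b)))
        = (lam a)⁻¹ * dd (v a) (dd (v a) (dd (v k) (dd (v k) u))) y0 - (lam k)⁻¹ * (T k a ^ 2 / lam a)
          + lam k * β * (lam a - a0 + ∑ b, (p b - a0 * y b) * ((lam a)⁻¹ * T a b)) := by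
      intro a
      have h3 : T k a = - (lam k * (β * (p a - a0 * y a) * lam a)) := by linarith [(hmaxa a).1]
      have h4 : ∑ b, (p b - a0 * y b) * ((lam a)⁻¹ * T a b) =
          (lam a)⁻¹ * ∑ b, (p b - a0 * y b) * T a b := by
        rw [Finset.mul_sum]; exact Finset.sum_congr rfl fun _ _ => by ring
      rw [h4, h3]
      have := (hlam a).ne'
      have := (hlam k).ne'
      field_simp
      ring
    simp_rw [h2]
    rw [Finset.sum_add_distrib, Finset.sum_sub_distrib, ← Finset.mul_sum, ← Finset.mul_sum, ← hq,
      Finset.sum_add_distrib, Finset.sum_sub_distrib, Finset.sum_comm]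
    simp_rw [← Finset.mul_sum, hJ]
    simp
    ring
  have hTk : ∀ b, T k b = - (lam k * (β * (p b - a0 * y b) * lam b)) := fun b => by
    linarith [(hmaxa b).1]
  have hc1 : ∑ b, (p b - s * y b) * T k b =
      - (lam k * β * ∑ b, (p b - s * y b) * (p b - a0 * y b) * lam b) := by
    rw [Finset.mul_sum, ← Finset.sum_neg_distrib]
    exact Finset.sum_congr rfl fun b _ => by rw [hTk]; ring
  have hc2 : ∑ b, (p b - a0 * y b) * Γ1 b = ∑ b, (p b - a0 * y b) * (F1 b + P * (p b / u y0))
      + γ * 2 / V * ∑ b, (p b - s * y b) * (p b - a0 * y b) * lam b := by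
    rw [Finset.mul_sum, ← Finset.sum_add_distrib]
    exact Finset.sum_congr rfl fun b _ => by rw [hΓ1]; ring
  rw [hc1] at hM'
  rw [hc2] at hsum
  have := le_trans (add_le_add_left hM' _) hsum
  refine le_trans (le_of_eq ?_) this
  ring

end interior

section flat
open Matrix Filter Topology
variable {E : Type*} [NormedAddCommGroup E] [InnerProductSpace ℝ E]

lemma circ_hasDerivAt {f : E → ℝ} (hf : Differentiable ℝ f) (y w : E) (t : ℝ) :
    HasDerivAt (fun t : ℝ => f (Real.cos t • y + Real.sin t • w))
      (-Real.sin t * dd y f (Real.cos t • y + Real.sin t • w)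
        + Real.cos t * dd w f (Real.cos t • y + Real.sin t • w)) t := by
  have h1 : HasDerivAt (fun t : ℝ => Real.cos t • y + Real.sin t • w)
      ((-Real.sin t) • y + Real.cos t • w) t :=
    ((Real.hasDerivAt_cos t).smul_const y).add ((Real.hasDerivAt_sin t).smul_const w)
  have := (hf (Real.cos t • y + Real.sin t • w)).hasFDerivAt.comp_hasDerivAt t h1
  refine this.congr_deriv ?_
  simp [dd]

lemma left_max_deriv {f : ℝ → ℝ} {d : ℝ} (hf : HasDerivAt f d 0)
    (hm : ∀ t, -1 < t → t < 0 → f t ≤ f 0) : 0 ≤ d := by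
  have h1 := hf.tendsto_slope.mono_left (nhdsLT_le_nhdsNE (0:ℝ))
  refine ge_of_tendsto h1 ?_
  filter_upwards [Ioo_mem_nhdsLT (show (-1:ℝ) < 0 by norm_num)] with t ht
  rw [slope_def_field]
  have := hm t ht.1 ht.2
  apply div_nonneg_of_nonpos <;> linarith [ht.2]

/-- boundary identities from differentiating `u = y·Du` along the sphere -/
lemma bdry_ident {u : E → ℝ} (hu : ContDiff ℝ (⊤ : ℕ∞) u) {R : ℝ} (y w : E)
    (hy : ‖y‖ = R) (hw : ‖w‖ = R) (hyw : ⟪y, w⟫ = 0)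
    (hbc : ∀ z : E, ‖z‖ = R → dd z u z = u z) :
    dd w (dd y u) y = 0 ∧
      dd w (dd w (dd y u)) y = dd y (dd y u) y - dd w (dd w u) y := by
  set c : ℝ → E := fun t => Real.cos t • y + Real.sin t • w with hc
  have hcn : ∀ t, ‖c t‖ = R := by
    intro t
    have hR : 0 ≤ R := hy ▸ norm_nonneg y
    have : ‖c t‖ ^ 2 = R ^ 2 := by
      rw [hc]; simp only
      rw [norm_add_sq_real, inner_smul_left, inner_smul_right, hyw, norm_smul, norm_smul, hy, hw]
      simp only [Real.norm_eq_abs, mul_pow, sq_abs]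
      have := Real.sin_sq_add_cos_sq t
      simp only [mul_zero, add_zero]
      linear_combination R ^ 2 * this
    exact (sq_eq_sq₀ (norm_nonneg _) hR).1 this
  have h0 : ∀ t, u (c t) - (Real.cos t * dd y u (c t) + Real.sin t * dd w u (c t)) = 0 := by
    intro t
    rw [← dd_smul, ← dd_smul, ← dd_add, hbc _ (hcn t), sub_self]
  have hd : ∀ f : E → ℝ, ContDiff ℝ (⊤ : ℕ∞) f → ∀ t, HasDerivAt (fun t => f (c t))
      (-Real.sin t * dd y f (c t) + Real.cos t * dd w f (c t)) t :=
    fun f hf t => circ_hasDerivAt (smooth_diff hf) y w t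
  have hW : ∀ t, Real.cos t * (-Real.sin t * dd y (dd y u) (c t) + Real.cos t * dd w (dd y u) (c t))
      + Real.sin t * (-Real.sin t * dd y (dd w u) (c t) + Real.cos t * dd w (dd w u) (c t)) = 0 := by
    intro t
    have h1 := (hd u hu t).sub (((Real.hasDerivAt_cos t).mul (hd _ (dd_contDiff hu y) t)).add
      ((Real.hasDerivAt_sin t).mul (hd _ (dd_contDiff hu w) t)))
    have h2 : HasDerivAt (fun _ : ℝ => (0:ℝ)) 0 t := hasDerivAt_const _ _
    have h3 := h1.unique (h2.congr_of_eventuallyEq (Eventually.of_forall h0))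
    linear_combination -h3
  have c0 : c 0 = y := by simp [hc]
  constructor
  · have := hW 0
    simpa [c0] using this
  · have d1 := (Real.hasDerivAt_cos 0).mul ((((Real.hasDerivAt_sin 0).neg).mul
      (hd _ (dd_contDiff (dd_contDiff hu y) y) 0)).add ((Real.hasDerivAt_cos 0).mul
      (hd _ (dd_contDiff (dd_contDiff hu y) w) 0)))
    have d2 := (Real.hasDerivAt_sin 0).mul ((((Real.hasDerivAt_sin 0).neg).mul
      (hd _ (dd_contDiff (dd_contDiff hu w) y) 0)).add ((Real.hasDerivAt_cos 0).mul
      (hd _ (dd_contDiff (dd_contDiff hu w) w) 0)))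
    have h1 := d1.add d2
    have h2 : HasDerivAt (fun _ : ℝ => (0:ℝ)) 0 0 := hasDerivAt_const _ _
    have h3 := h1.unique (h2.congr_of_eventuallyEq (Eventually.of_forall hW))
    simp [c0] at h3
    linarith

lemma conv_ineq {u : E → ℝ} (hu : ContDiff ℝ (⊤ : ℕ∞) u) {R : ℝ}
    (hconv : ∀ y : E, ‖y‖ ≤ R → ∀ ζ, 0 ≤ dd ζ (dd ζ u) y) (y ζ : E)
    (h0 : ‖y‖ ≤ R) (h1 : ‖y + ζ‖ ≤ R) :
    dd ζ u y ≤ dd ζ u (y + ζ) ∧ u y + dd ζ u y ≤ u (y + ζ) := by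
  have hin : ∀ t : ℝ, t ∈ Icc (0:ℝ) 1 → ‖y + t • ζ‖ ≤ R := by
    intro t ht
    have : y + t • ζ = (1 - t) • y + t • (y + ζ) := by module
    rw [this]
    refine (norm_add_le _ _).trans ?_
    rw [norm_smul, norm_smul, Real.norm_of_nonneg ht.1, Real.norm_of_nonneg (by linarith [ht.2])]
    nlinarith [ht.1, ht.2]
  have hd1 : ∀ t : ℝ, HasDerivAt (fun t : ℝ => u (y + t • ζ)) (dd ζ u (y + t • ζ)) t :=
    fun t => line_hasDerivAt (smooth_diff hu) y ζ t
  have hd2 : ∀ t : ℝ, HasDerivAt (fun t : ℝ => dd ζ u (y + t • ζ)) (dd ζ (dd ζ u) (y + t • ζ)) t :=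
    fun t => line_hasDerivAt (smooth_diff (dd_contDiff hu ζ)) y ζ t
  have hmono : MonotoneOn (fun t : ℝ => dd ζ u (y + t • ζ)) (Icc 0 1) := by
    apply monotoneOn_of_deriv_nonneg (convex_Icc 0 1)
    · exact fun t _ => (hd2 t).continuousAt.continuousWithinAt
    · exact fun t _ => (hd2 t).differentiableAt.differentiableWithinAt
    · intro t ht
      rw [(hd2 t).deriv]
      exact hconv _ (hin t (interior_subset ht)) ζ
  constructor
  · have := hmono (left_mem_Icc.2 zero_le_one) (right_mem_Icc.2 zero_le_one) zero_le_one
    simpa using this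
  · obtain ⟨c, hc, he⟩ := exists_hasDerivAt_eq_slope (fun t : ℝ => u (y + t • ζ)) _ zero_lt_one
      (fun t _ => (hd1 t).continuousAt.continuousWithinAt) (fun t _ => hd1 t)
    have := hmono (left_mem_Icc.2 zero_le_one) ⟨hc.1.le, hc.2.le⟩ hc.1.le
    simp at this he
    linarith

lemma c1_bound {u : E → ℝ} (hu : ContDiff ℝ (⊤ : ℕ∞) u) {R K : ℝ} (hR : 0 < R)
    (hK : ∀ y : E, ‖y‖ ≤ R → u y ≤ K)
    (hconv : ∀ y : E, ‖y‖ ≤ R → ∀ ζ, 0 ≤ dd ζ (dd ζ u) y)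
    (hbc : ∀ z : E, ‖z‖ = R → dd z u z = u z) (y ζ : E) (hy : ‖y‖ ≤ R) (hζ : ‖ζ‖ = 1) :
    dd ζ u y ≤ K / R := by
  have hb : ∀ z : E, ‖z‖ = R → dd ζ u z ≤ K / R := by
    intro z hz
    have e : z + (R • ζ + (-1 : ℝ) • z) = R • ζ := by module
    have hn : ‖R • ζ‖ = R := by rw [norm_smul, hζ, Real.norm_of_nonneg hR.le, mul_one]
    have := (conv_ineq hu hconv z (R • ζ + (-1 : ℝ) • z) hz.le (by rw [e, hn])).2
    rw [e, dd_add, dd_smul, dd_smul, hbc z hz] at this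
    have h2 := hK _ hn.le
    rw [le_div_iff₀ hR]
    linarith
  obtain ⟨T, hT, hTn⟩ : ∃ T ∈ Icc (0:ℝ) (2 * R), ‖y + T • ζ‖ = R := by
    have hc : ContinuousOn (fun t : ℝ => ‖y + t • ζ‖) (Icc 0 (2 * R)) := by fun_prop
    have := intermediate_value_Icc (by linarith : (0:ℝ) ≤ 2 * R) hc
    obtain ⟨T, h1, h2⟩ := this (show R ∈ _ by
      constructor
      · simpa using hy
      · have h1 : ‖(2 * R) • ζ‖ ≤ ‖y + (2 * R) • ζ‖ + ‖y‖ := by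
          have := norm_sub_le (y + (2 * R) • ζ) y
          simpa using this
        rw [norm_smul, hζ, Real.norm_of_nonneg (by linarith), mul_one] at h1
        linarith)
    exact ⟨T, h1, h2⟩
  rcases hT.1.eq_or_lt with h0 | h0
  · rw [← h0] at hTn
    exact hb y (by simpa using hTn)
  · have h1 := (conv_ineq hu hconv y (T • ζ) hy hTn.le).1
    rw [dd_smul, dd_smul] at h1
    exact (le_of_mul_le_mul_left h1 h0).trans (hb _ hTn)

lemma c1_bound' {u : E → ℝ} (hu : ContDiff ℝ (⊤ : ℕ∞) u) {R K : ℝ} (hR : 0 < R) (hK0 : 0 < K)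
    (hK : ∀ y : E, ‖y‖ ≤ R → u y ≤ K)
    (hconv : ∀ y : E, ‖y‖ ≤ R → ∀ ζ, 0 ≤ dd ζ (dd ζ u) y)
    (hbc : ∀ z : E, ‖z‖ = R → dd z u z = u z) (y : E) (hy : ‖y‖ ≤ R) :
    ‖fderiv ℝ u y‖ ≤ K / R := by
  have h1 : ∀ ζ : E, ‖ζ‖ = 1 → |dd ζ u y| ≤ K / R := by
    intro ζ hζ
    have a := c1_bound hu hR hK hconv hbc y ζ hy hζ
    have b := c1_bound hu hR hK hconv hbc y ((-1:ℝ) • ζ) hy (by simpa using hζ)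
    rw [dd_smul] at b
    rw [abs_le]; constructor <;> linarith
  refine ContinuousLinearMap.opNorm_le_bound _ (by positivity) fun ζ => ?_
  by_cases h0 : ζ = 0
  · simp [h0]
  have hn : 0 < ‖ζ‖ := norm_pos_iff.2 h0
  have := h1 (‖ζ‖⁻¹ • ζ) (by rw [norm_smul]; simp [hn.ne'])
  rw [dd_smul, abs_mul, abs_of_pos (inv_pos.2 hn), inv_mul_le_iff₀ hn] at this
  rw [Real.norm_eq_abs]
  exact this.trans (le_of_eq (mul_comm _ _))

variable {ι : Type*} [Fintype ι]

lemma dd_sum_smul {κ : Type*} (s : Finset κ) (a : κ → ℝ) (v : κ → E) (f : E → ℝ) (y : E) :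
    dd (∑ b ∈ s, a b • v b) f y = ∑ b ∈ s, a b * dd (v b) f y := by
  simp [dd, map_sum]

lemma sB_eq (u : E → ℝ) (v : OrthonormalBasis ι ℝ E) (y : E) : sB u v y = u y - dd y u y := by
  have : dd y u y = dd (∑ b, ⟪v b, y⟫ • v b) u y := by rw [v.sum_repr']
  rw [this, dd_sum_smul]; rfl

lemma g2B_eq [CompleteSpace E] (u : E → ℝ) (v : OrthonormalBasis ι ℝ E) (y : E) :
    g2B u v y = ‖fderiv ℝ u y‖ ^ 2 := by
  have h1 : ∀ b, dd (v b) u y = ⟪v b, (InnerProductSpace.toDual ℝ E).symm (fderiv ℝ u y)⟫ := by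
    intro b
    rw [real_inner_comm, InnerProductSpace.toDual_symm_apply]; rfl
  have h2 := v.sum_sq_inner_right ((InnerProductSpace.toDual ℝ E).symm (fderiv ℝ u y))
  rw [LinearIsometryEquiv.norm_map] at h2
  rw [← h2]
  unfold g2B
  exact Finset.sum_congr rfl fun b _ => by rw [h1, sq]

end flat

section flatmain
open Matrix Filter Topology
variable {E : Type*} [NormedAddCommGroup E] [InnerProductSpace ℝ E]

/-- hypotheses of the flat problem -/
structure FlatSol (n : ℕ) (R P γ m K K0 M : ℝ) (u Γ0 : E → ℝ) : Prop where
  smooth : ContDiff ℝ (⊤ : ℕ∞) u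
  lower : ∀ y : E, ‖y‖ ≤ R → m ≤ u y
  upper : ∀ y : E, ‖y‖ ≤ R → u y ≤ K
  conv : ∀ y : E, ‖y‖ ≤ R → ∀ ζ : E, ζ ≠ 0 → 0 < dd ζ (dd ζ u) y
  bc : ∀ y : E, ‖y‖ = R → dd y u y = u y
  jet : ∀ y : E, ‖y‖ < R → ∀ ζ : E, ‖ζ‖ = 1 →
    ∃ b c, Jet (fun t : ℝ => Γ0 (y + t • ζ)) b c ∧ |b| ≤ K0 ∧ |c| ≤ K0
  det : ∀ v : OrthonormalBasis (Fin n) ℝ E, ∀ y : E, ‖y‖ < R → (hessM u v y).det =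
      Real.exp (Γ0 y + (P * Real.log (u y) + γ * Real.log (g2B u v y + sB u v y * sB u v y)))
  bdry : ∀ y : E, ‖y‖ = R → dd y (dd y u) y ≤ M * R ^ 2

lemma exists_diag [FiniteDimensional ℝ E] {n : ℕ} (hE : Module.finrank ℝ E = n)
    {u : E → ℝ} (hu : ContDiff ℝ (⊤ : ℕ∞) u) (y : E) :
    ∃ (v : OrthonormalBasis (Fin n) ℝ E) (lam : Fin n → ℝ),
      (∀ a b, dd (v a) (dd (v b) u) y = if a = b then lam a else 0) ∧
      (∀ a w, dd (v a) (dd w u) y = lam a * ⟪v a, w⟫) ∧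
      (∀ ζ, dd ζ (dd ζ u) y = ∑ a, lam a * ⟪v a, ζ⟫ ^ 2) := by
  set B := fderiv ℝ (fderiv ℝ u) y with hB
  let A : E →ₗ[ℝ] E :=
    { toFun := fun x => (InnerProductSpace.toDual ℝ E).symm (B x)
      map_add' := fun a b => by simp
      map_smul' := fun a b => by simp }
  have hA : ∀ x z, ⟪A x, z⟫ = dd x (dd z u) y := by
    intro x z
    rw [dd_dd_eq hu]
    exact InnerProductSpace.toDual_symm_apply
  have hsym : A.IsSymmetric := by
    intro x z
    rw [hA, ← real_inner_comm, hA, dd_comm hu]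
  refine ⟨hsym.eigenvectorBasis hE, hsym.eigenvalues hE, ?_, ?_, ?_⟩
  · intro a b
    rw [← hA, hsym.apply_eigenvectorBasis, inner_smul_left,
      orthonormal_iff_ite.1 (hsym.eigenvectorBasis hE).orthonormal]
    simp
  · intro a w
    rw [← hA, hsym.apply_eigenvectorBasis, inner_smul_left]
    simp
  · intro ζ
    rw [← hA, ← (hsym.eigenvectorBasis hE).sum_inner_mul_inner]
    refine Finset.sum_congr rfl fun a _ => ?_
    rw [hsym, hsym.apply_eigenvectorBasis, inner_smul_right, real_inner_comm]
    simp; ring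

lemma hess_psd {n : ℕ} {u : E → ℝ} (hu : ContDiff ℝ (⊤ : ℕ∞) u) (v : Fin n → E) (y : E)
    (h : ∀ ζ, 0 ≤ dd ζ (dd ζ u) y) : (hessM u v y).PosSemidef := by
  refine Matrix.PosSemidef.of_dotProduct_mulVec_nonneg ?_ ?_
  · ext a b
    simp [hessM, dd_comm hu (v a) (v b)]
  · intro x
    have := h (∑ a, x a • v a)
    rw [dd_sum_smul] at this
    refine this.trans (le_of_eq ?_)
    simp only [dotProduct, mulVec, hessM, Matrix.of_apply, star_trivial]
    refine Finset.sum_congr rfl fun a _ => ?_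
    congr 1
    rw [dd_comm hu, dd_sum_smul]
    exact Finset.sum_congr rfl fun b _ => by rw [mul_comm, dd_comm hu]

set_option maxHeartbeats 1000000 in
/-- real-number part of the interior estimate -/
lemma interior_real {n : ℕ} {m K K0 R G V0 P γ β a0 C2 C3 : ℝ}
    (hm : 0 < m) (hK : 0 < K) (hK0 : 0 ≤ K0) (hR : 0 < R) (hG : 0 ≤ G) (hV0 : 0 < V0) (ha0 : 0 ≤ a0)
    (hC2 : C2 = K0 + |P| / m + |P| * G ^ 2 / m ^ 2 + |γ| * ((2 * (1 + R ^ 2) + 4 * K) / V0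
      + 4 * (G + 2 * K * R) ^ 2 / V0 ^ 2))
    (hC3 : C3 = n * a0 + n * ((G + a0 * R) * (K0 + |P| * (G / m))))
    (hβ : β = 3 * C2 + 1)
    (lam y p F1 : Fin n → ℝ) (F2 u V s : ℝ) (k : Fin n) (hlam : ∀ a, 0 < lam a)
    (hy : ∀ a, |y a| ≤ R) (hp : ∀ a, |p a| ≤ G) (hF1 : ∀ a, |F1 a| ≤ K0) (hF2 : |F2| ≤ K0)
    (hu : m ≤ u) (hV : V0 ≤ V) (hs : |s| ≤ 2 * K)
    (h : F2 + P * (lam k / u - p k ^ 2 / u ^ 2)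
      + γ * ((2 * (lam k ^ 2 * (1 + y k ^ 2) - s * lam k)) / V
          - (2 * (p k - s * y k) * lam k) ^ 2 / V ^ 2)
      + lam k * (β * (∑ a, lam a - Fintype.card (Fin n) * a0
          + ∑ b, (p b - a0 * y b) * (F1 b + P * (p b / u)))) ≤ 0) :
    lam k ≤ max 1 (β * C3) := by
  rcases le_total (lam k) 1 with h1 | h1
  · exact h1.trans (le_max_left _ _)
  refine le_trans ?_ (le_max_right _ _)
  set L := lam k with hL
  have hu0 : 0 < u := hm.trans_le hu
  have hVp : 0 < V := hV0.trans_le hV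
  have hC2n : 0 ≤ C2 := by rw [hC2]; positivity
  have hLp : 0 < L := hlam k
  have hp2 : p k ^ 2 ≤ G ^ 2 := by
    rw [← sq_abs]; exact pow_le_pow_left₀ (abs_nonneg _) (hp k) 2
  have hy2 : y k ^ 2 ≤ R ^ 2 := by
    rw [← sq_abs]; exact pow_le_pow_left₀ (abs_nonneg _) (hy k) 2
  have b1 : -(|P| / m * L) ≤ P * (L / u) := by
    have : |P * (L / u)| ≤ |P| / m * L := by
      rw [abs_mul, abs_of_pos (div_pos hLp hu0), div_mul_eq_mul_div, mul_div_assoc]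
      gcongr
    exact (abs_le.1 this).1
  have b2 : P * (p k ^ 2 / u ^ 2) ≤ |P| * G ^ 2 / m ^ 2 := by
    have : |P * (p k ^ 2 / u ^ 2)| ≤ |P| * G ^ 2 / m ^ 2 := by
      rw [abs_mul, abs_of_nonneg (by positivity : 0 ≤ p k ^ 2 / u ^ 2), mul_div_assoc]
      gcongr
    exact (abs_le.1 this).2
  have b3 : -(|γ| * ((2 * (1 + R ^ 2) + 4 * K) / V0 * L ^ 2)) ≤
      γ * ((2 * (L ^ 2 * (1 + y k ^ 2) - s * L)) / V) := by
    have h3 : |2 * (L ^ 2 * (1 + y k ^ 2) - s * L)| ≤ (2 * (1 + R ^ 2) + 4 * K) * L ^ 2 := by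
      have q1 : |s * L| ≤ 2 * K * L ^ 2 := by
        rw [abs_mul, abs_of_pos hLp]
        have : L ≤ L ^ 2 := by nlinarith
        exact mul_le_mul hs this hLp.le (by positivity)
      have q2 := abs_le.1 q1
      have q3 : L ^ 2 * (1 + y k ^ 2) ≤ L ^ 2 * (1 + R ^ 2) := by gcongr
      have q4 : 0 ≤ L ^ 2 * (1 + y k ^ 2) := by positivity
      rw [abs_le]
      have q5 : 0 ≤ L ^ 2 * (1 + R ^ 2) := by positivity
      constructor <;> linarith [q2.1, q2.2]
    have : |γ * ((2 * (L ^ 2 * (1 + y k ^ 2) - s * L)) / V)| ≤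
        |γ| * ((2 * (1 + R ^ 2) + 4 * K) / V0 * L ^ 2) := by
      rw [abs_mul, abs_div, abs_of_pos hVp, div_mul_eq_mul_div]
      gcongr
    exact (abs_le.1 this).1
  have b4 : γ * ((2 * (p k - s * y k) * L) ^ 2 / V ^ 2) ≤
      |γ| * (4 * (G + 2 * K * R) ^ 2 / V0 ^ 2 * L ^ 2) := by
    have h3 : (p k - s * y k) ^ 2 ≤ (G + 2 * K * R) ^ 2 := by
      rw [← sq_abs]
      refine pow_le_pow_left₀ (abs_nonneg _) ?_ 2
      refine (abs_sub _ _).trans ?_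
      rw [abs_mul]
      exact add_le_add (hp k) (mul_le_mul hs (hy k) (abs_nonneg _) (by positivity))
    have : |γ * ((2 * (p k - s * y k) * L) ^ 2 / V ^ 2)| ≤
        |γ| * (4 * (G + 2 * K * R) ^ 2 / V0 ^ 2 * L ^ 2) := by
      rw [abs_mul, abs_of_nonneg (by positivity : 0 ≤ (2 * (p k - s * y k) * L) ^ 2 / V ^ 2),
        div_mul_eq_mul_div]
      have : (2 * (p k - s * y k) * L) ^ 2 = 4 * (p k - s * y k) ^ 2 * L ^ 2 := by ring
      rw [this]
      gcongr
    exact (abs_le.1 this).2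
  have b5 : L ≤ ∑ a, lam a :=
    Finset.single_le_sum (f := lam) (fun a _ => (hlam a).le) (Finset.mem_univ k)
  have b6 : -(n * ((G + a0 * R) * (K0 + |P| * (G / m)))) ≤
      ∑ b, (p b - a0 * y b) * (F1 b + P * (p b / u)) := by
    have : |∑ b, (p b - a0 * y b) * (F1 b + P * (p b / u))| ≤
        n * ((G + a0 * R) * (K0 + |P| * (G / m))) := by
      refine (Finset.abs_sum_le_sum_abs _ _).trans ?_
      have : ∀ b ∈ (Finset.univ : Finset (Fin n)), |(p b - a0 * y b) * (F1 b + P * (p b / u))| ≤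
          (G + a0 * R) * (K0 + |P| * (G / m)) := by
        intro b _
        rw [abs_mul]
        refine mul_le_mul ?_ ?_ (abs_nonneg _) (by positivity)
        · refine (abs_sub _ _).trans ?_
          rw [abs_mul, abs_of_nonneg ha0]
          exact add_le_add (hp b) (mul_le_mul_of_nonneg_left (hy b) ha0)
        · refine (abs_add_le _ _).trans ?_
          rw [abs_mul, abs_div, abs_of_pos hu0]
          refine add_le_add (hF1 b) ?_
          have := hp b
          gcongr
      refine (Finset.sum_le_card_nsmul _ _ _ this).trans ?_
      simp
    exact (abs_le.1 this).1
  have b7 := (abs_le.1 hF2).1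
  rw [Fintype.card_fin] at h
  have hβp : 0 < β := by rw [hβ]; linarith
  have c1 : L * (β * (L - C3)) ≤ L * (β * (∑ a, lam a - n * a0
          + ∑ b, (p b - a0 * y b) * (F1 b + P * (p b / u)))) := by
    gcongr
    rw [hC3]; linarith
  have c2 : -(C2 * (3 * L ^ 2)) ≤ F2 + P * (L / u - p k ^ 2 / u ^ 2)
      + γ * ((2 * (L ^ 2 * (1 + y k ^ 2) - s * L)) / V
          - (2 * (p k - s * y k) * L) ^ 2 / V ^ 2) := by
    set A1 := |P| / m
    set A2 := |P| * G ^ 2 / m ^ 2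
    have hA1 : 0 ≤ A1 := by positivity
    have hA2 : 0 ≤ A2 := by positivity
    set A3 := |γ| * ((2 * (1 + R ^ 2) + 4 * K) / V0) with hA3d
    set A4 := |γ| * (4 * (G + 2 * K * R) ^ 2 / V0 ^ 2) with hA4d
    have hA3 : 0 ≤ A3 := by positivity
    have hA4 : 0 ≤ A4 := by positivity
    have e2 : C2 = K0 + A1 + A2 + A3 + A4 := by rw [hC2, hA3d, hA4d]; ring
    have l1 : L ≤ L ^ 2 := by nlinarith
    have l2 : 1 ≤ L ^ 2 := by nlinarith
    rw [← mul_assoc, ← hA3d] at b3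
    rw [← mul_assoc, ← hA4d] at b4
    rw [e2, mul_sub, mul_sub]
    linarith [mul_le_mul_of_nonneg_left l1 hA1, mul_le_mul_of_nonneg_left l2 hA2,
      mul_le_mul_of_nonneg_left l2 hK0, mul_nonneg hA3 (sq_nonneg L), mul_nonneg hA4 (sq_nonneg L),
      mul_nonneg hA1 (sq_nonneg L), mul_nonneg hA2 (sq_nonneg L), mul_nonneg hK0 (sq_nonneg L)]
  have c3 : L * (β * (L - C3)) - C2 * (3 * L ^ 2) ≤ 0 := by linarith
  have c4 : L * (L - β * C3) ≤ 0 := by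
    have : L * (β * (L - C3)) - C2 * (3 * L ^ 2) = L * (L - β * C3) := by rw [hβ]; ring
    linarith
  by_contra hcon
  push Not at hcon
  have := mul_pos hLp (sub_pos.2 hcon)
  linarith

end flatmain

section flatthm
open Matrix Filter Topology
variable {E : Type*} [NormedAddCommGroup E] [InnerProductSpace ℝ E]

lemma bdry_case {n : ℕ} {R K a0 β M : ℝ} {u : E → ℝ} (hu : ContDiff ℝ (⊤ : ℕ∞) u)
    (hR : 0 < R) (hβ : 0 ≤ β) (ha0 : a0 = K / R ^ 2)
    (hK : ∀ y : E, ‖y‖ ≤ R → u y ≤ K)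
    (hconv : ∀ y : E, ‖y‖ ≤ R → ∀ ζ, 0 ≤ dd ζ (dd ζ u) y)
    (hbc : ∀ z : E, ‖z‖ = R → dd z u z = u z)
    (hM : ∀ y : E, ‖y‖ = R → dd y (dd y u) y ≤ M * R ^ 2)
    (v : OrthonormalBasis (Fin n) ℝ E) (lam : Fin n → ℝ) (y0 : E) (hy0 : ‖y0‖ = R)
    (hv : ∀ a w, dd (v a) (dd w u) y0 = lam a * ⟪v a, w⟫) (k : Fin n)
    (hmax : ∀ y : E, ‖y‖ ≤ R → dd (v k) (dd (v k) u) y *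
      Real.exp (β * (1 / 2 * g2B u v y + a0 * sB u v y)) ≤ dd (v k) (dd (v k) u) y0 *
      Real.exp (β * (1 / 2 * g2B u v y0 + a0 * sB u v y0))) :
    lam k ≤ M := by
  set U := dd y0 (dd y0 u) y0 / R ^ 2 with hU
  have hUM : U ≤ M := by rw [hU, div_le_iff₀ (by positivity)]; exact hM y0 hy0
  have hU0 : 0 ≤ U := div_nonneg (hconv y0 hy0.le y0) (by positivity)
  have hperp : ∀ τ : E, ⟪y0, τ⟫ = 0 → dd τ (dd y0 u) y0 = 0 := by
    intro τ hτ
    by_cases h0 : τ = 0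
    · simp [h0, dd]
    have hn : 0 < ‖τ‖ := norm_pos_iff.2 h0
    have := (bdry_ident hu y0 ((R / ‖τ‖) • τ) hy0 (by
      rw [norm_smul, Real.norm_of_nonneg (by positivity)]; field_simp)
      (by rw [inner_smul_right, hτ, mul_zero]) hbc).1
    rw [dd_smul] at this
    exact (mul_eq_zero.1 this).resolve_left (by positivity)
  have heig : ∀ a, lam a * ⟪v a, y0⟫ = U * ⟪v a, y0⟫ := by
    intro a
    rw [← hv a y0]
    have e : v a = (⟪v a, y0⟫ / R ^ 2) • y0 + (v a + (-(⟪v a, y0⟫ / R ^ 2)) • y0) := by module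
    have h1 := hperp (v a + (-(⟪v a, y0⟫ / R ^ 2)) • y0) (by
      rw [inner_add_right, inner_smul_right, real_inner_self_eq_norm_sq, hy0, real_inner_comm y0]
      field_simp; ring)
    have h2 : dd (v a) (dd y0 u) y0 = dd ((⟪v a, y0⟫ / R ^ 2) • y0 + (v a + (-(⟪v a, y0⟫ / R ^ 2)) • y0)) (dd y0 u) y0 := by
      rw [← e]
    rw [h2, dd_add, h1, dd_smul, hU]; ring
  by_cases hα : ⟪v k, y0⟫ = 0
  swap
  · have := mul_right_cancel₀ hα (heig k)
    rw [this]; exact hUM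
  have hk1 : ‖v k‖ = 1 := v.orthonormal.1 k
  have hB := (bdry_ident hu y0 (R • v k) hy0 (by
      rw [norm_smul, Real.norm_of_nonneg hR.le, hk1, mul_one])
      (by rw [inner_smul_right, real_inner_comm, hα, mul_zero]) hbc).2
  have hlk : dd (v k) (dd (v k) u) y0 = lam k := by
    rw [hv, real_inner_self_eq_norm_sq, hk1]; ring
  have hlk0 : 0 ≤ lam k := hlk ▸ hconv y0 hy0.le _
  have hB' : dd y0 (dd (v k) (dd (v k) u)) y0 = U - lam k := by
    have e1 : dd (R • v k) (dd (R • v k) (dd y0 u)) y0 = R ^ 2 * dd (v k) (dd (v k) (dd y0 u)) y0 := by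
      have : dd (R • v k) (dd y0 u) = fun z => R * dd (v k) (dd y0 u) z := by
        funext z; rw [dd_smul]
      rw [dd_smul, this]
      have h3 : dd (v k) (fun z => R * dd (v k) (dd y0 u) z) y0 = R * dd (v k) (dd (v k) (dd y0 u)) y0 := by
        unfold dd
        rw [fderiv_const_mul]
        · simp
        · exact smooth_diff (dd_contDiff (dd_contDiff hu y0) (v k)) y0
      rw [h3]; ring
    have e2 : dd (R • v k) (dd (R • v k) u) y0 = R ^ 2 * lam k := by
      rw [dd_smul, hv, inner_smul_right, real_inner_self_eq_norm_sq, hk1]; ring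
    rw [e1, e2] at hB
    have e3 : dd y0 (dd (v k) (dd (v k) u)) y0 = dd (v k) (dd (v k) (dd y0 u)) y0 := by
      rw [dd_comm (dd_contDiff hu _), dd_comm hu]
    rw [e3, hU]
    field_simp
    linarith
  -- radial derivative
  have d1 : HasDerivAt (fun t : ℝ => dd (v k) (dd (v k) u) (y0 + t • y0)) (U - lam k) 0 := by
    have := line_hasDerivAt (smooth_diff (dd_contDiff (dd_contDiff hu (v k)) (v k))) y0 y0 0
    rw [← hB']; simpa using this
  have d2 : HasDerivAt (fun t : ℝ => g2B u v (y0 + t • y0)) (2 * (U * u y0)) 0 := by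
    have h1 : ∀ b, HasDerivAt (fun t : ℝ => dd (v b) u (y0 + t • y0) * dd (v b) u (y0 + t • y0))
        (2 * (U * (⟪v b, y0⟫ * dd (v b) u y0))) 0 := by
      intro b
      have h2 := line_hasDerivAt (smooth_diff (dd_contDiff hu (v b))) y0 y0 0
      refine (h2.mul h2).congr_deriv ?_
      simp only [zero_smul, add_zero]
      rw [dd_comm hu, hv, heig]; ring
    have h3 := HasDerivAt.fun_sum (u := Finset.univ) fun b _ => h1 b
    refine h3.congr_deriv ?_
    rw [← Finset.mul_sum, ← Finset.mul_sum, ← dd_sum_smul]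
    rw [v.sum_repr', hbc y0 hy0]
  have d3 : HasDerivAt (fun t : ℝ => sB u v (y0 + t • y0)) (-(U * R ^ 2)) 0 := by
    have h1 := line_hasDerivAt (smooth_diff hu) y0 y0 0
    have h2 := line_hasDerivAt (smooth_diff (dd_contDiff hu y0)) y0 y0 0
    have h3 : HasDerivAt (fun t : ℝ => 1 + t) 1 0 := by
      simpa using (hasDerivAt_id (0:ℝ)).const_add 1
    have h4 := h1.sub (h3.mul h2)
    refine (h4.congr_of_eventuallyEq (Eventually.of_forall fun t => ?_)).congr_deriv ?_
    · simp only [sB_eq]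
      have : dd (y0 + t • y0) u (y0 + t • y0) = (1 + t) * dd y0 u (y0 + t • y0) := by
        rw [← dd_smul]; congr 1; module
      rw [this]; rfl
    · simp only [zero_smul, add_zero, hU]; field_simp; ring
  have d4 := d1.mul ((((d2.const_mul (1/2)).add (d3.const_mul a0)).const_mul β).exp)
  have d5 := left_max_deriv d4 (by
    intro t ht1 ht2
    have h1 : ‖y0 + t • y0‖ ≤ R := by
      have : y0 + t • y0 = (1 + t) • y0 := by module
      rw [this, norm_smul, hy0, Real.norm_of_nonneg (by linarith)]
      nlinarith
    have := hmax _ h1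
    simpa using this)
  simp only [Pi.add_apply, zero_smul, add_zero, hlk] at d5
  set X := Real.exp (β * (1 / 2 * g2B u v y0 + a0 * sB u v y0)) with hX
  have hXp : 0 < X := Real.exp_pos _
  have h6 : 0 ≤ X * ((U - lam k) + lam k * (β * (U * (u y0 - a0 * R ^ 2)))) := by
    refine d5.trans (le_of_eq ?_)
    ring
  have h7 := nonneg_of_mul_nonneg_right h6 hXp
  have h8 : u y0 - a0 * R ^ 2 ≤ 0 := by
    rw [ha0]
    have := hK y0 hy0.le
    field_simp
    linarith
  have h9 : lam k * (β * (U * (u y0 - a0 * R ^ 2))) ≤ 0 :=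
    mul_nonpos_of_nonneg_of_nonpos hlk0 (mul_nonpos_of_nonneg_of_nonpos hβ
      (mul_nonpos_of_nonneg_of_nonpos hU0 h8))
  linarith


set_option maxHeartbeats 1000000 in
lemma flat_bound (n : ℕ) (hn : 1 ≤ n) (R P γ m K K0 : ℝ) (hR : 0 < R) (hm : 0 < m) (hK : 0 < K)
    (hK0 : 0 ≤ K0) :
    ∃ C : ℝ, 0 < C ∧ ∀ (E : Type) [NormedAddCommGroup E] [InnerProductSpace ℝ E]
      [FiniteDimensional ℝ E], Module.finrank ℝ E = n →
      ∀ (u Γ0 : E → ℝ) (M : ℝ), 0 ≤ M → FlatSol n R P γ m K K0 M u Γ0 →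
      ∀ y : E, ‖y‖ ≤ R → ∀ ζ : E, dd ζ (dd ζ u) y ≤ C * (1 + M) * ‖ζ‖ ^ 2 := by
  set G := K / R with hG
  have hGp : 0 < G := by positivity
  set V0 := m ^ 2 / (1 + R ^ 2) with hV0
  have hV0p : 0 < V0 := by positivity
  set a0 := K / R ^ 2 with ha0
  have ha0p : 0 < a0 := by positivity
  set C2 := K0 + |P| / m + |P| * G ^ 2 / m ^ 2 + |γ| * ((2 * (1 + R ^ 2) + 4 * K) / V0
      + 4 * (G + 2 * K * R) ^ 2 / V0 ^ 2) with hC2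
  have hC2p : 0 ≤ C2 := by positivity
  set C3 := n * a0 + n * ((G + a0 * R) * (K0 + |P| * (G / m))) with hC3
  have hC3p : 0 ≤ C3 := by positivity
  set β := 3 * C2 + 1 with hβ
  have hβp : 0 < β := by positivity
  set Φ := β * (1 / 2 * G ^ 2 + a0 * (2 * K)) with hΦ
  refine ⟨(1 + β * C3) * Real.exp (2 * Φ), by positivity, ?_⟩
  intro E _ _ _ hE u Γ0 M hM hS
  have hu := hS.smooth
  have hconv : ∀ y : E, ‖y‖ ≤ R → ∀ ζ, 0 ≤ dd ζ (dd ζ u) y := by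
    intro y hy ζ
    by_cases h0 : ζ = 0
    · simp [h0, dd]
    · exact (hS.conv y hy ζ h0).le
  have hgrad : ∀ y : E, ‖y‖ ≤ R → ‖fderiv ℝ u y‖ ≤ G :=
    c1_bound' hu hR hK hS.upper hconv hS.bc
  have hs : ∀ y : E, ‖y‖ ≤ R → |u y - dd y u y| ≤ 2 * K := by
    intro y hy
    have h1 : |dd y u y| ≤ K := by
      refine ((fderiv ℝ u y).le_opNorm y).trans ?_
      refine (mul_le_mul (hgrad y hy) hy (norm_nonneg _) hGp.le).trans (le_of_eq ?_)
      rw [hG]; field_simp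
    have h2 := hS.upper y hy
    have h3 := hS.lower y hy
    have h4 := abs_le.1 h1
    rw [abs_le]
    constructor <;> linarith [h4.1, h4.2]
  set φ : E → ℝ := fun y => β * (1 / 2 * ‖fderiv ℝ u y‖ ^ 2 + a0 * (u y - dd y u y)) with hφ
  have hφb : ∀ y : E, ‖y‖ ≤ R → |φ y| ≤ Φ := by
    intro y hy
    rw [hφ, hΦ]
    simp only
    rw [abs_mul, abs_of_pos hβp]
    refine mul_le_mul_of_nonneg_left ((abs_add_le _ _).trans ?_) hβp.le
    rw [abs_mul, abs_mul a0, abs_of_pos ha0p,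
      abs_of_nonneg (sq_nonneg ‖fderiv ℝ u y‖)]
    have := hgrad y hy
    have := hs y hy
    rw [abs_of_pos (by norm_num : (0:ℝ) < 1 / 2)]
    gcongr
  have hf1 : Continuous (fderiv ℝ u) := hu.continuous_fderiv (by simp)
  have hf2 : Continuous (fderiv ℝ (fderiv ℝ u)) :=
    (hu.fderiv_right (m := (⊤ : ℕ∞)) (by simp)).continuous_fderiv (by simp)
  have hφc : Continuous φ := by
    have h1 : Continuous fun y => dd y u y := hf1.clm_apply continuous_id
    have h2 := hu.continuous
    exact continuous_const.mul ((continuous_const.mul (hf1.norm.pow 2)).add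
      (continuous_const.mul (h2.sub h1)))
  set Q : E × E → ℝ := fun z => dd z.2 (dd z.2 u) z.1 * Real.exp (φ z.1) with hQ
  have hQc : Continuous Q := by
    refine Continuous.mul ?_ (Real.continuous_exp.comp (hφc.comp continuous_fst))
    have : (fun z : E × E => dd z.2 (dd z.2 u) z.1) =
        fun z : E × E => fderiv ℝ (fderiv ℝ u) z.1 z.2 z.2 := by
      funext z; rw [dd_dd_eq hu]
    rw [this]
    exact ((hf2.comp continuous_fst).clm_apply continuous_snd).clm_apply continuous_snd
  have : Nontrivial E := Module.nontrivial_of_finrank_pos (R := ℝ) (by rw [hE]; omega)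
  obtain ⟨ζ1, hζ1⟩ := exists_norm_eq E (zero_le_one (α := ℝ))
  obtain ⟨⟨y0, ζ0⟩, hmem, hmaxQ⟩ := ((isCompact_closedBall (0:E) R).prod
    (isCompact_sphere (0:E) 1)).exists_isMaxOn ⟨(0, ζ1), by simp [hR.le, hζ1]⟩ hQc.continuousOn
  have hy0 : ‖y0‖ ≤ R := by simpa using hmem.1
  have hζ0 : ‖ζ0‖ = 1 := by simpa using hmem.2
  obtain ⟨v, lam, hdiag, hv, hquad⟩ := exists_diag hE hu y0
  have : Nonempty (Fin n) := ⟨⟨0, by omega⟩⟩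
  obtain ⟨k, hk⟩ := Finite.exists_max lam
  have hv1 : ∀ a, ‖v a‖ = 1 := v.orthonormal.1
  have hlamv : ∀ a, dd (v a) (dd (v a) u) y0 = lam a := fun a => by rw [hdiag]; simp
  have hlam : ∀ a, 0 < lam a := fun a => by
    rw [← hlamv]
    exact hS.conv y0 hy0 _ (fun h => by have := hv1 a; rw [h] at this; simp at this)
  have hle0 : dd ζ0 (dd ζ0 u) y0 ≤ lam k := by
    rw [hquad]
    have h1 : ∑ a, lam a * ⟪v a, ζ0⟫ ^ 2 ≤ ∑ a, lam k * ⟪v a, ζ0⟫ ^ 2 :=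
      Finset.sum_le_sum fun a _ => mul_le_mul_of_nonneg_right (hk a) (sq_nonneg _)
    rw [← Finset.mul_sum, v.sum_sq_inner_right, hζ0] at h1
    linarith
  have hmax1 : ∀ y : E, ‖y‖ ≤ R → ∀ ζ : E, ‖ζ‖ = 1 →
      dd ζ (dd ζ u) y * Real.exp (φ y) ≤ lam k * Real.exp (φ y0) := by
    intro y hy ζ hζ
    have h1 : Q (y, ζ) ≤ Q (y0, ζ0) :=
      hmaxQ (show (y, ζ) ∈ _ from ⟨by simpa using hy, by simpa using hζ⟩)
    exact h1.trans (mul_le_mul_of_nonneg_right hle0 (Real.exp_pos _).le)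
  have hφv : ∀ y, φ y = β * (1 / 2 * g2B u v y + a0 * sB u v y) := by
    intro y; rw [g2B_eq, sB_eq]
  have hmain : lam k ≤ max (max 1 (β * C3)) M := by
    rcases hy0.lt_or_eq with hlt | heq
    · refine le_trans ?_ (le_max_left _ _)
      have hev : ∀ᶠ y in 𝓝 y0, ‖y‖ < R := continuous_norm.continuousAt.eventually_lt_const hlt
      choose F1 F2 hF hF1 hF2 using fun b => hS.jet y0 hlt (v b) (hv1 b)
      have hVlow : V0 ≤ g2B u v y0 + sB u v y0 * sB u v y0 := by
        rw [g2B_eq, sB_eq, hV0, div_le_iff₀ (by positivity)]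
        have h1 : |dd y0 u y0| ≤ ‖fderiv ℝ u y0‖ * R :=
          ((fderiv ℝ u y0).le_opNorm y0).trans (mul_le_mul_of_nonneg_left hy0 (norm_nonneg _))
        set s := u y0 - dd y0 u y0 with hsd
        set D := ‖fderiv ℝ u y0‖ with hD
        have h2 : m ≤ D * R + |s| := by
          have := hS.lower y0 hy0
          have := le_abs_self s
          have := le_abs_self (dd y0 u y0)
          linarith
        have h3 : m ^ 2 ≤ (D * R + |s|) ^ 2 := pow_le_pow_left₀ hm.le h2 2
        have h4 : (D * R + |s|) ^ 2 ≤ (D ^ 2 + |s| * |s|) * (1 + R ^ 2) := by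
          nlinarith [sq_nonneg (D - |s| * R)]
        rw [abs_mul_abs_self] at h4
        exact h3.trans h4
      have hII := interior_ineq hu y0 v lam hlam hdiag Γ0 P γ β a0 (hm.trans_le (hS.lower y0 hy0))
        (hV0p.trans_le hVlow)
        (hev.mono fun y hy => hess_psd hu v y (hconv y hy.le))
        (hev.mono fun y hy => hS.det v y hy) F1 F2 hF k (by
          filter_upwards [hev] with y hy
          rw [← hφv, ← hφv, hlamv]
          exact hmax1 y hy.le _ (hv1 k))
      refine interior_real (n := n) hm hK hK0 hR hGp.le hV0p ha0p.le hC2 hC3 hβ lam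
        (fun b => ⟪v b, y0⟫) (fun b => dd (v b) u y0) F1 (F2 k) (u y0) _ (sB u v y0) k hlam
        ?_ ?_ hF1 (hF2 k) (hS.lower y0 hy0) hVlow ?_ hII
      · intro a
        have := abs_real_inner_le_norm (v a) y0
        rw [hv1, one_mul] at this
        exact this.trans hy0
      · intro a
        have := (fderiv ℝ u y0).le_opNorm (v a)
        rw [hv1, mul_one] at this
        exact this.trans (hgrad y0 hy0)
      · rw [sB_eq]; exact hs y0 hy0
    · refine le_trans ?_ (le_max_right _ _)
      refine bdry_case hu hR hβp.le ha0 hS.upper hconv hS.bc hS.bdry v lam y0 heq hv k ?_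
      intro y hy
      rw [← hφv, ← hφv, hlamv]
      exact hmax1 y hy _ (hv1 k)
  have hunit : ∀ y : E, ‖y‖ ≤ R → ∀ ζ : E, ‖ζ‖ = 1 →
      dd ζ (dd ζ u) y ≤ (1 + β * C3) * Real.exp (2 * Φ) * (1 + M) := by
    intro y hy ζ hζ
    have h1 := hmax1 y hy ζ hζ
    have h2 : dd ζ (dd ζ u) y ≤ lam k * Real.exp (φ y0 - φ y) := by
      rw [Real.exp_sub, ← mul_div_assoc, le_div_iff₀ (Real.exp_pos _)]
      exact h1
    refine h2.trans ?_
    have h3 : Real.exp (φ y0 - φ y) ≤ Real.exp (2 * Φ) := by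
      apply Real.exp_le_exp.2
      have a := abs_le.1 (hφb y hy)
      have b := abs_le.1 (hφb y0 hy0)
      linarith [a.1, b.2]
    have hbc : 0 ≤ β * C3 := by positivity
    have hx : (1 + β * C3) * (1 + M) = 1 + β * C3 + M + β * C3 * M := by ring
    have h4 : lam k ≤ (1 + β * C3) * (1 + M) := by
      refine hmain.trans (max_le (max_le ?_ ?_) ?_) <;>
        linarith [mul_nonneg hbc hM, hbc, hM, hx]
    calc lam k * Real.exp (φ y0 - φ y) ≤ (1 + β * C3) * (1 + M) * Real.exp (2 * Φ) :=
          mul_le_mul h4 h3 (Real.exp_pos _).le (by positivity)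
      _ = _ := by ring
  intro y hy ζ
  by_cases h0 : ζ = 0
  · simp [h0, dd]
  have hnz : 0 < ‖ζ‖ := norm_pos_iff.2 h0
  have h1 := hunit y hy (‖ζ‖⁻¹ • ζ) (by rw [norm_smul]; simp [hnz.ne'])
  rw [dd_smul, dd_comm hu, dd_smul, ← mul_assoc] at h1
  have h2 := mul_le_mul_of_nonneg_right h1 (sq_nonneg ‖ζ‖)
  refine le_trans (le_of_eq ?_) h2
  field_simp

end flatthm

section chart
open Filter Topology

/-- horizontal hyperplane -/
abbrev HE (n : ℕ) : Type := ↥((ℝ ∙ eVec n)ᗮ)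

/-- ambient lift -/
def Yv (n : ℕ) (y : HE n) : Euc n := (y : Euc n) - eVec n

/-- central projection to the sphere -/
def xiF (n : ℕ) (θ : ℝ) (y : HE n) : Euc n := ‖Yv n y‖⁻¹ • Yv n y + Real.cos θ • eVec n

/-- homogeneous extension restricted to the hyperplane -/
def uF (n : ℕ) (θ : ℝ) (g : Euc n → ℝ) (y : HE n) : ℝ := ‖Yv n y‖ * g (xiF n θ y)

variable {n : ℕ}

lemma eVec_norm : ‖eVec n‖ = 1 := by simp [eVec]

lemma eVec_inner (x : Euc n) : ⟪x, eVec n⟫ = -x (Fin.last n) := by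
  simp [eVec, EuclideanSpace.inner_single_right]

lemma HE_inner (y : HE n) : ⟪(y : Euc n), eVec n⟫ = 0 := by
  have := y.2
  rw [Submodule.mem_orthogonal_singleton_iff_inner_left] at this
  exact this

lemma HE_mem {x : Euc n} (h : ⟪x, eVec n⟫ = 0) : x ∈ (ℝ ∙ eVec n)ᗮ := by
  rw [Submodule.mem_orthogonal_singleton_iff_inner_left]; exact h

lemma HE_finrank : Module.finrank ℝ (HE n) = n := by
  have : Fact (Module.finrank ℝ (Euc n) = n + 1) := ⟨by simp⟩
  apply Submodule.finrank_orthogonal_span_singleton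
  intro h
  have := eVec_norm (n := n)
  rw [h] at this; simp at this

lemma Yv_sq (y : HE n) : ‖Yv n y‖ ^ 2 = 1 + ‖y‖ ^ 2 := by
  unfold Yv
  rw [norm_sub_sq_real, HE_inner, eVec_norm, Submodule.coe_norm]; ring

lemma Yv_one_le (y : HE n) : 1 ≤ ‖Yv n y‖ := by
  have := Yv_sq y
  by_contra h
  push Not at h
  nlinarith [norm_nonneg (Yv n y), sq_nonneg ‖y‖]

lemma Yv_pos (y : HE n) : 0 < ‖Yv n y‖ := lt_of_lt_of_le one_pos (Yv_one_le y)

lemma Yv_inner_e (y : HE n) : ⟪Yv n y, eVec n⟫ = -1 := by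
  unfold Yv
  rw [inner_sub_left, HE_inner, real_inner_self_eq_norm_sq, eVec_norm]; norm_num

lemma nu_eq (θ : ℝ) (y : HE n) : sphNormal n θ (xiF n θ y) = ‖Yv n y‖⁻¹ • Yv n y := by
  simp [sphNormal, xiF]

lemma nu_norm (θ : ℝ) (y : HE n) : ‖sphNormal n θ (xiF n θ y)‖ = 1 := by
  rw [nu_eq, norm_smul]; simp [(Yv_pos y).ne']

lemma nu_inner_e (θ : ℝ) (y : HE n) : ⟪sphNormal n θ (xiF n θ y), eVec n⟫ = -‖Yv n y‖⁻¹ := by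
  rw [nu_eq, inner_smul_left, Yv_inner_e]; simp

lemma Yv_eq (θ : ℝ) (y : HE n) : Yv n y = ‖Yv n y‖ • sphNormal n θ (xiF n θ y) := by
  rw [nu_eq, smul_smul, mul_inv_cancel₀ (Yv_pos y).ne', one_smul]

lemma tproj_apply (θ : ℝ) (ξ X : Euc n) :
    tproj n θ ξ X = X - ⟪sphNormal n θ ξ, X⟫ • sphNormal n θ ξ := by
  simp [tproj]

lemma tproj_nu {θ : ℝ} {ξ : Euc n} (h : ‖sphNormal n θ ξ‖ = 1) (X : Euc n) :
    ⟪tproj n θ ξ X, sphNormal n θ ξ⟫ = 0 := by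
  rw [tproj_apply, inner_sub_left, inner_smul_left, real_inner_self_eq_norm_sq, h, real_inner_comm]
  simp

lemma tproj_inner_tproj {θ : ℝ} {ξ : Euc n} (h : ‖sphNormal n θ ξ‖ = 1) (X Z : Euc n) :
    ⟪tproj n θ ξ X, tproj n θ ξ Z⟫ = ⟪tproj n θ ξ X, Z⟫ := by
  rw [tproj_apply _ _ Z, inner_sub_right, inner_smul_right, tproj_nu h]; simp

lemma tproj_inner_symm (θ : ℝ) (ξ X Z : Euc n) :
    ⟪tproj n θ ξ X, Z⟫ = ⟪X, tproj n θ ξ Z⟫ := by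
  rw [tproj_apply, tproj_apply, inner_sub_left, inner_sub_right, inner_smul_left, inner_smul_right,
    real_inner_comm X]
  simp; ring

lemma tproj_norm_le {θ : ℝ} {ξ : Euc n} (h : ‖sphNormal n θ ξ‖ = 1) (X : Euc n) :
    ‖tproj n θ ξ X‖ ≤ ‖X‖ := by
  have h1 : ‖tproj n θ ξ X‖ ^ 2 ≤ ‖tproj n θ ξ X‖ * ‖X‖ := by
    rw [← real_inner_self_eq_norm_sq, tproj_inner_tproj h]
    exact real_inner_le_norm _ _
  by_contra hc
  push Not at hc
  nlinarith [norm_nonneg X]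

/-- the position vector `∇h + hν` -/
def xV (n : ℕ) (θ : ℝ) (g : Euc n → ℝ) (ξ : Euc n) : Euc n :=
  sgrad n θ g ξ + g ξ • sphNormal n θ ξ

lemma Yv_contDiff : ContDiff ℝ (⊤ : ℕ∞) (Yv n) := by
  unfold Yv
  exact ((ℝ ∙ eVec n)ᗮ.subtypeL.contDiff).sub contDiff_const

lemma rF_contDiff : ContDiff ℝ (⊤ : ℕ∞) (fun y : HE n => ‖Yv n y‖) :=
  Yv_contDiff.norm ℝ fun y => norm_pos_iff.1 (Yv_pos y)

lemma xiF_contDiff (θ : ℝ) : ContDiff ℝ (⊤ : ℕ∞) (xiF n θ) := by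
  unfold xiF
  exact ((rF_contDiff.inv fun y => (Yv_pos y).ne').smul Yv_contDiff).add contDiff_const

lemma uF_contDiff (θ : ℝ) {g : Euc n → ℝ} (hg : ContDiff ℝ (⊤ : ℕ∞) g) :
    ContDiff ℝ (⊤ : ℕ∞) (uF n θ g) :=
  rF_contDiff.mul (hg.comp (xiF_contDiff θ))

lemma Yv_line (y ζ : HE n) (t : ℝ) : Yv n (y + t • ζ) = Yv n y + t • (ζ : Euc n) := by
  simp [Yv]; abel

lemma r_deriv (θ : ℝ) (y ζ : HE n) :
    HasDerivAt (fun t : ℝ => ‖Yv n (y + t • ζ)‖) ⟪sphNormal n θ (xiF n θ y), (ζ : Euc n)⟫ 0 := by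
  have h1 : HasDerivAt (fun t : ℝ => Yv n (y + t • ζ)) (ζ : Euc n) 0 := by
    simp_rw [Yv_line]
    simpa using ((hasDerivAt_id (0:ℝ)).smul_const (ζ : Euc n)).const_add (Yv n y)
  have h2 := h1.norm_sq
  have h3 := h2.sqrt (by simpa using (Yv_pos y).ne')
  simp only [Real.sqrt_sq (norm_nonneg _)] at h3
  refine h3.congr_deriv ?_
  simp only [zero_smul, add_zero, nu_eq, inner_smul_left]
  have := (Yv_pos y).ne'
  simp
  field_simp

lemma nu_deriv (θ : ℝ) (y ζ : HE n) :
    HasDerivAt (fun t : ℝ => sphNormal n θ (xiF n θ (y + t • ζ)))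
      (‖Yv n y‖⁻¹ • tproj n θ (xiF n θ y) (ζ : Euc n)) 0 := by
  have h1 : HasDerivAt (fun t : ℝ => Yv n (y + t • ζ)) (ζ : Euc n) 0 := by
    simp_rw [Yv_line]
    simpa using ((hasDerivAt_id (0:ℝ)).smul_const (ζ : Euc n)).const_add (Yv n y)
  have h2 := ((r_deriv θ y ζ).inv (by simpa using (Yv_pos y).ne')).smul h1
  refine (h2.congr_of_eventuallyEq (Eventually.of_forall fun t => ?_)).congr_deriv ?_
  · simp only [nu_eq]; rfl
  · simp only [zero_smul, add_zero, Pi.inv_apply]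
    rw [tproj_apply]
    set ν := sphNormal n θ (xiF n θ y) with hν
    have hY : Yv n y = ‖Yv n y‖ • ν := Yv_eq θ y
    set r := ‖Yv n y‖ with hr
    have : r ≠ 0 := (Yv_pos y).ne'
    rw [hY, smul_sub, smul_smul, smul_smul, sub_eq_add_neg, ← neg_smul]
    congr 2
    field_simp

lemma xi_deriv (θ : ℝ) (y ζ : HE n) :
    HasDerivAt (fun t : ℝ => xiF n θ (y + t • ζ))
      (‖Yv n y‖⁻¹ • tproj n θ (xiF n θ y) (ζ : Euc n)) 0 := by
  have := (nu_deriv θ y ζ).add_const (Real.cos θ • eVec n)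
  refine this.congr_of_eventuallyEq (Eventually.of_forall fun t => ?_)
  simp [sphNormal]

lemma grad_contDiff {g : Euc n → ℝ} (hg : ContDiff ℝ (⊤ : ℕ∞) g) :
    ContDiff ℝ (⊤ : ℕ∞) (gradient g) := by
  have : ContDiff ℝ (⊤ : ℕ∞) (fderiv ℝ g) := hg.fderiv_right (by simp)
  exact (InnerProductSpace.toDual ℝ (Euc n)).symm.contDiff.comp this

lemma fderiv_eq_grad (g : Euc n → ℝ) (ξ X : Euc n) :
    fderiv ℝ g ξ X = ⟪gradient g ξ, X⟫ := by
  unfold gradient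
  rw [InnerProductSpace.toDual_symm_apply]

lemma g_xi_deriv (θ : ℝ) {g : Euc n → ℝ} (hg : ContDiff ℝ (⊤ : ℕ∞) g) (y ζ : HE n) :
    HasDerivAt (fun t : ℝ => g (xiF n θ (y + t • ζ)))
      ⟪gradient g (xiF n θ y), ‖Yv n y‖⁻¹ • tproj n θ (xiF n θ y) (ζ : Euc n)⟫ 0 := by
  have h1 := xi_deriv θ y ζ
  have h2 : HasFDerivAt g (fderiv ℝ g (xiF n θ y)) (xiF n θ (y + (0:ℝ) • ζ)) := by
    simpa using ((hg.differentiable (by simp)) (xiF n θ y)).hasFDerivAt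
  have := h2.comp_hasDerivAt (0:ℝ) h1
  rw [fderiv_eq_grad] at this
  exact this

lemma dd_uF (θ : ℝ) {g : Euc n → ℝ} (hg : ContDiff ℝ (⊤ : ℕ∞) g) (ζ y : HE n) :
    dd ζ (uF n θ g) y = ⟪xV n θ g (xiF n θ y), (ζ : Euc n)⟫ := by
  have h1 := line_hasDerivAt (smooth_diff (uF_contDiff θ hg)) y ζ 0
  have h2 := (r_deriv θ y ζ).mul (g_xi_deriv θ hg y ζ)
  have h3 := h1.unique h2
  simp only [zero_smul, add_zero] at h3
  rw [h3, xV, inner_add_left, inner_smul_left, sgrad, tproj_inner_symm, inner_smul_right]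
  have := (Yv_pos y).ne'
  simp
  field_simp
  ring

lemma xV_eq (θ : ℝ) (g : Euc n → ℝ) (ξ : Euc n) : xV n θ g ξ = gradient g ξ +
    (g ξ - ⟪sphNormal n θ ξ, gradient g ξ⟫) • sphNormal n θ ξ := by
  rw [xV, sgrad, tproj_apply]; module

lemma dd_dd_uF (θ : ℝ) {g : Euc n → ℝ} (hg : ContDiff ℝ (⊤ : ℕ∞) g) (ζ' ζ y : HE n) :
    dd ζ' (dd ζ (uF n θ g)) y = ‖Yv n y‖⁻¹ *
      (shess n θ g (xiF n θ y) (tproj n θ (xiF n θ y) (ζ' : Euc n)) (tproj n θ (xiF n θ y) (ζ : Euc n))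
        + g (xiF n θ y) * ⟪tproj n θ (xiF n θ y) (ζ' : Euc n), tproj n θ (xiF n θ y) (ζ : Euc n)⟫) := by
  have h1 := line_hasDerivAt (smooth_diff (dd_contDiff (uF_contDiff θ hg) ζ)) y ζ' 0
  have hG : HasDerivAt (fun t : ℝ => gradient g (xiF n θ (y + t • ζ')))
      (fderiv ℝ (gradient g) (xiF n θ y) (‖Yv n y‖⁻¹ • tproj n θ (xiF n θ y) (ζ' : Euc n))) 0 := by
    have h2 : HasFDerivAt (gradient g) (fderiv ℝ (gradient g) (xiF n θ y))
        (xiF n θ (y + (0:ℝ) • ζ')) := by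
      simpa using (((grad_contDiff hg).differentiable (by simp)) (xiF n θ y)).hasFDerivAt
    exact h2.comp_hasDerivAt (0:ℝ) (xi_deriv θ y ζ')
  have hν := nu_deriv θ y ζ'
  have hg' := g_xi_deriv θ hg y ζ'
  have hc : HasDerivAt (fun _ : ℝ => (ζ : Euc n)) 0 0 := hasDerivAt_const _ _
  have h4 := (hG.add ((hg'.sub (hν.inner ℝ hG)).smul hν)).inner ℝ hc
  have h5 : HasDerivAt (fun t : ℝ => dd ζ (uF n θ g) (y + t • ζ')) _ 0 :=
    h4.congr_of_eventuallyEq (Eventually.of_forall fun t => by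
      simp only [dd_uF θ hg, xV_eq]; rfl)
  have h6 := h1.unique h5
  simp only [zero_smul, add_zero] at h6
  rw [h6]
  have hn := nu_norm θ y
  simp only [shess]
  set ξ := xiF n θ y
  set ν := sphNormal n θ ξ
  set D := gradient g ξ
  set w := tproj n θ ξ (ζ' : Euc n) with hw
  set r := ‖Yv n y‖
  set L := fderiv ℝ (gradient g) ξ
  rw [tproj_inner_tproj hn, tproj_apply θ ξ (ζ : Euc n)]
  simp only [inner_add_left, inner_smul_left, inner_sub_right, inner_smul_right, map_smul,
    inner_zero_right, Pi.add_apply, Pi.sub_apply, Pi.smul_apply, zero_smul, add_zero, zero_add]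
  rw [real_inner_comm D w, real_inner_comm (L w) ν, real_inner_comm D ν]
  simp
  ring

end chart

section detsec
open Filter Topology Matrix
variable {n : ℕ}

lemma exists_W (v : OrthonormalBasis (Fin n) ℝ (HE n)) :
    ∃ W : OrthonormalBasis (Fin n ⊕ Unit) ℝ (Euc n),
      (∀ a, W (Sum.inl a) = (v a : Euc n)) ∧ W (Sum.inr ()) = eVec n := by
  have hor : Orthonormal ℝ (Sum.elim (fun a => (v a : Euc n)) (fun _ : Unit => eVec n)) := by
    rw [orthonormal_iff_ite]
    have hv := orthonormal_iff_ite.1 v.orthonormal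
    rintro (a | a) (b | b)
    · have := hv a b
      rw [Submodule.coe_inner] at this
      simpa using this
    · simpa using HE_inner (v a)
    · have := HE_inner (v b)
      rw [real_inner_comm] at this
      simpa using this
    · simp only [Sum.elim_inr, real_inner_self_eq_norm_sq, eVec_norm]; simp
  have hcard : Fintype.card (Fin n ⊕ Unit) = Module.finrank ℝ (Euc n) := by simp
  have hne : Nonempty (Fin n ⊕ Unit) := ⟨Sum.inr ()⟩
  set b := basisOfOrthonormalOfCardEqFinrank hor hcard with hb
  have hbc : (b : Fin n ⊕ Unit → Euc n) = Sum.elim (fun a => (v a : Euc n)) (fun _ : Unit => eVec n) :=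
    coe_basisOfOrthonormalOfCardEqFinrank hor hcard
  refine ⟨b.toOrthonormalBasis (by rw [hbc]; exact hor), ?_, ?_⟩
  · intro a; simp [hbc]
  · simp [hbc]

lemma V_eq {θ : ℝ} {g : Euc n → ℝ} (hg : ContDiff ℝ (⊤ : ℕ∞) g)
    (v : OrthonormalBasis (Fin n) ℝ (HE n)) (y : HE n) :
    sB (uF n θ g) v y = -⟪xV n θ g (xiF n θ y), eVec n⟫ ∧
    g2B (uF n θ g) v y + sB (uF n θ g) v y * sB (uF n θ g) v y =
      g (xiF n θ y) ^ 2 + ‖sgrad n θ g (xiF n θ y)‖ ^ 2 := by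
  have hn := nu_norm θ y
  have hs : sB (uF n θ g) v y = -⟪xV n θ g (xiF n θ y), eVec n⟫ := by
    rw [sB_eq, dd_uF θ hg]
    have e : (y : Euc n) = Yv n y + eVec n := by simp [Yv]
    have h1 : ⟪xV n θ g (xiF n θ y), sphNormal n θ (xiF n θ y)⟫ = g (xiF n θ y) := by
      rw [xV, inner_add_left, sgrad, tproj_nu hn, inner_smul_left, real_inner_self_eq_norm_sq, hn]
      simp
    rw [e, inner_add_right]
    have h2 : ⟪xV n θ g (xiF n θ y), Yv n y⟫ = ‖Yv n y‖ * g (xiF n θ y) := by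
      have h3 := congrArg (fun z => ⟪xV n θ g (xiF n θ y), z⟫) (Yv_eq θ y)
      simp only [inner_smul_right, h1] at h3
      exact h3
    rw [h2, uF]; ring
  refine ⟨hs, ?_⟩
  obtain ⟨W, hW1, hW2⟩ := exists_W v
  have h2 := W.sum_sq_inner_right (xV n θ g (xiF n θ y))
  rw [Fintype.sum_sum_type] at h2
  simp only [hW1, Finset.univ_unique, PUnit.default_eq_unit, Finset.sum_singleton, hW2] at h2
  have h3 : ‖xV n θ g (xiF n θ y)‖ ^ 2 = g (xiF n θ y) ^ 2 + ‖sgrad n θ g (xiF n θ y)‖ ^ 2 := by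
    rw [xV, norm_add_sq_real, inner_smul_right, sgrad, tproj_nu hn, norm_smul, hn]
    simp; ring
  rw [← h3, ← h2, hs]
  congr 1
  · unfold g2B
    refine Finset.sum_congr rfl fun b _ => ?_
    rw [dd_uF θ hg, real_inner_comm, sq]
  · rw [real_inner_comm]; ring

lemma hessOp_inner {θ : ℝ} (g : Euc n → ℝ) {ξ : Euc n} (hn : ‖sphNormal n θ ξ‖ = 1) (z z' : Euc n) :
    ⟪z, hessOp n θ g ξ z'⟫ = shess n θ g ξ (tproj n θ ξ z') (tproj n θ ξ z)
      + g ξ * ⟪tproj n θ ξ z', tproj n θ ξ z⟫ + ⟪sphNormal n θ ξ, z⟫ * ⟪sphNormal n θ ξ, z'⟫ := by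
  unfold hessOp thessOp normalPart shess
  simp only [_root_.add_apply, _root_.sub_apply,
    _root_.smul_apply, ContinuousLinearMap.comp_apply,
    ContinuousLinearMap.smulRight_apply, innerSL_apply_apply, inner_add_right, inner_sub_right,
    inner_smul_right]
  rw [tproj_inner_tproj hn, real_inner_comm _ z, tproj_inner_symm, real_inner_comm _ z,
    real_inner_comm _ z]
  ring

lemma hess_det {θ : ℝ} {g : Euc n → ℝ} (hg : ContDiff ℝ (⊤ : ℕ∞) g)
    (v : OrthonormalBasis (Fin n) ℝ (HE n)) (y : HE n) :
    sdet n θ g (xiF n θ y) = ‖Yv n y‖ ^ (n + 2) * (hessM (uF n θ g) v y).det := by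
  obtain ⟨W, hW1, hW2⟩ := exists_W v
  have hn := nu_norm θ y
  have hr := Yv_pos y
  set ξ := xiF n θ y with hξ
  set ν := sphNormal n θ ξ with hν
  set r := ‖Yv n y‖ with hrd
  let T : Euc n →ₗ[ℝ] Euc n :=
    { toFun := fun z => z + ⟪eVec n, z⟫ • (ν - eVec n)
      map_add' := fun a b => by rw [inner_add_right]; module
      map_smul' := fun a b => by rw [inner_smul_right]; simp; module }
  have hT : ∀ z, T z = z + ⟪eVec n, z⟫ • (ν - eVec n) := fun z => rfl
  have hTl : ∀ a, T (W (Sum.inl a)) = v a := by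
    intro a
    rw [hT, hW1, real_inner_comm, HE_inner]; simp
  have hTr : T (W (Sum.inr ())) = ν := by
    rw [hT, hW2, real_inner_self_eq_norm_sq, eVec_norm]; simp
  set p : Fin n → ℝ := fun a => ⟪ν, (v a : Euc n)⟫ with hp
  have hdT : LinearMap.det T = -r⁻¹ := by
    rw [← LinearMap.det_toMatrix W.toBasis]
    have : LinearMap.toMatrix W.toBasis W.toBasis T =
        fromBlocks 1 (replicateCol Unit p) 0 (Matrix.of fun _ _ => -r⁻¹) := by
      ext i j
      rw [LinearMap.toMatrix_apply, OrthonormalBasis.coe_toBasis, OrthonormalBasis.coe_toBasis_repr_apply,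
        OrthonormalBasis.repr_apply_apply]
      have hv := orthonormal_iff_ite.1 v.orthonormal
      rcases i with a | a <;> rcases j with b | b
      · rw [hTl, hW1, fromBlocks_apply₁₁, ← Submodule.coe_inner, hv, Matrix.one_apply]
      · rw [hTr, hW1, fromBlocks_apply₁₂, real_inner_comm]; rfl
      · rw [hTl, hW2, fromBlocks_apply₂₁, real_inner_comm, HE_inner]; rfl
      · rw [hTr, hW2, fromBlocks_apply₂₂, real_inner_comm, hν, hξ, nu_inner_e]; rfl
    rw [this, det_fromBlocks_zero₂₁]
    simp
  set N : Euc n →ₗ[ℝ] Euc n := (hessOp n θ g ξ).toLinearMap with hN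
  have hNa : ∀ z, N z = hessOp n θ g ξ z := fun z => rfl
  have hdN : LinearMap.det (LinearMap.adjoint T ∘ₗ N ∘ₗ T) = r ^ n * (hessM (uF n θ g) v y).det := by
    rw [← LinearMap.det_toMatrix W.toBasis]
    have hνν : ⟪ν, ν⟫ = 1 := by rw [real_inner_self_eq_norm_sq, hn]; norm_num
    have htν : tproj n θ ξ ν = 0 := by
      rw [tproj_apply, ← hν, real_inner_self_eq_norm_sq, hn]; simp
    have : LinearMap.toMatrix W.toBasis W.toBasis (LinearMap.adjoint T ∘ₗ N ∘ₗ T) =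
        fromBlocks (r • hessM (uF n θ g) v y + replicateCol Unit p * replicateRow Unit p)
          (replicateCol Unit p) (replicateRow Unit p) 1 := by
      ext i j
      rw [LinearMap.toMatrix_apply, OrthonormalBasis.coe_toBasis, OrthonormalBasis.coe_toBasis_repr_apply,
        OrthonormalBasis.repr_apply_apply, LinearMap.comp_apply, LinearMap.comp_apply,
        LinearMap.adjoint_inner_right, hNa, hessOp_inner g hn, ← hν]
      rcases i with a | a <;> rcases j with b | b
      · rw [hTl, hTl, fromBlocks_apply₁₁]
        simp only [Matrix.add_apply, Matrix.smul_apply, hessM, Matrix.of_apply]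
        rw [dd_comm (uF_contDiff θ hg), dd_dd_uF θ hg, ← hξ, ← hrd]
        simp [Matrix.mul_apply, hp, hr.ne']
      · rw [hTl, hTr, fromBlocks_apply₁₂, htν, real_inner_self_eq_norm_sq, hn]
        simp [shess, hp]
      · rw [hTl, hTr, fromBlocks_apply₂₁, htν, real_inner_self_eq_norm_sq, hn]
        simp [shess, hp]
      · rw [hTr, fromBlocks_apply₂₂, htν, hνν]
        simp [shess]
    rw [this, det_fromBlocks_one₂₂, add_sub_cancel_right, det_smul]
    simp
  have hda : LinearMap.det (LinearMap.adjoint T) = LinearMap.det T := by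
    rw [← LinearMap.det_toMatrix W.toBasis, ← LinearMap.det_toMatrix W.toBasis,
      LinearMap.toMatrix_adjoint, Matrix.det_conjTranspose]; simp
  rw [LinearMap.det_comp, LinearMap.det_comp, hda, hdT] at hdN
  have h1 : sdet n θ g ξ = LinearMap.det N := rfl
  rw [h1]
  have h2 : LinearMap.det N = r ^ 2 * (-r⁻¹ * (LinearMap.det N * -r⁻¹)) := by
    field_simp
  rw [h2, hdN]; ring

end detsec

section finalsec
open Filter Topology
variable {n : ℕ}

lemma r_le {θ : ℝ} (hc : 0 < cos θ) {y : HE n} (hy : ‖y‖ ≤ tan θ) : ‖Yv n y‖ ≤ (cos θ)⁻¹ := by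
  have h1 := Yv_sq y
  have h2 : 1 + tan θ ^ 2 = ((cos θ)⁻¹) ^ 2 := by
    have := Real.sin_sq_add_cos_sq θ
    rw [Real.tan_eq_sin_div_cos]; field_simp; linarith
  have h3 : ‖Yv n y‖ ^ 2 ≤ ((cos θ)⁻¹) ^ 2 := by
    rw [h1, ← h2]; have := norm_nonneg y; nlinarith
  exact (sq_le_sq₀ (norm_nonneg _) (by positivity)).1 h3

lemma r_eq {θ : ℝ} (hc : 0 < cos θ) {y : HE n} (hy : ‖y‖ = tan θ) : ‖Yv n y‖ = (cos θ)⁻¹ := by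
  have h1 := Yv_sq y
  have h2 : 1 + tan θ ^ 2 = ((cos θ)⁻¹) ^ 2 := by
    have := Real.sin_sq_add_cos_sq θ
    rw [Real.tan_eq_sin_div_cos]; field_simp; linarith
  have h3 : ‖Yv n y‖ ^ 2 = ((cos θ)⁻¹) ^ 2 := by rw [h1, ← h2, hy]
  exact (sq_eq_sq₀ (norm_nonneg _) (by positivity)).1 h3

lemma xiF_last (θ : ℝ) (y : HE n) : xiF n θ y (Fin.last n) = ‖Yv n y‖⁻¹ - cos θ := by
  have h1 := nu_inner_e θ y
  rw [sphNormal, inner_sub_left, inner_smul_left, real_inner_self_eq_norm_sq, eVec_norm,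
    eVec_inner] at h1
  simp at h1; linarith

lemma xiF_cap {θ : ℝ} (hc : 0 < cos θ) {y : HE n} (hy : ‖y‖ ≤ tan θ) : xiF n θ y ∈ cap n θ := by
  refine ⟨?_, nu_norm θ y⟩
  rw [xiF_last]
  have := inv_anti₀ (Yv_pos y) (r_le hc hy)
  rw [inv_inv] at this; linarith

lemma xiF_bdry {θ : ℝ} (hc : 0 < cos θ) {y : HE n} (hy : ‖y‖ = tan θ) :
    xiF n θ y ∈ capBdry n θ := by
  refine ⟨?_, nu_norm θ y⟩
  rw [xiF_last, r_eq hc hy, inv_inv]; ring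

lemma uF_lower {θ m : ℝ} (hc : 0 < cos θ) (hm : 0 < m) {g : Euc n → ℝ}
    (hg : ∀ ξ ∈ cap n θ, m ≤ g ξ) {y : HE n} (hy : ‖y‖ ≤ tan θ) : m ≤ uF n θ g y := by
  have h1 := hg _ (xiF_cap hc hy)
  have h2 := Yv_one_le y
  unfold uF; nlinarith

lemma conv_uF {θ : ℝ} (hc : 0 < cos θ) {g : Euc n → ℝ} (hg : ContDiff ℝ (⊤ : ℕ∞) g)
    (hcv : IsConvexSol n θ g) {y : HE n} (hy : ‖y‖ ≤ tan θ) {ζ : HE n} (hζ : ζ ≠ 0) :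
    0 < dd ζ (dd ζ (uF n θ g)) y := by
  rw [dd_dd_uF θ hg]
  refine mul_pos (inv_pos.2 (Yv_pos y)) ?_
  refine hcv _ (xiF_cap hc hy) _ (tproj_nu (nu_norm θ y) _) ?_
  intro h0
  apply hζ
  have h1 := h0
  rw [tproj_apply, sub_eq_zero] at h1
  have h2 := congrArg (fun z => ⟪z, eVec n⟫) h1
  simp only [inner_smul_left, HE_inner, nu_inner_e] at h2
  have h3 : ⟪sphNormal n θ (xiF n θ y), (ζ : Euc n)⟫ = 0 := by
    have := (inv_pos.2 (Yv_pos y)).ne'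
    simp only [conj_trivial] at h2
    rcases mul_eq_zero.1 h2.symm with h | h
    · exact h
    · exfalso; apply this; linarith
  rw [h3, zero_smul] at h1
  exact Subtype.ext h1

lemma conormal_eq {θ : ℝ} (hs : 0 < sin θ) (ξ : Euc n) :
    conormal n θ ξ = cot θ • sphNormal n θ ξ + (sin θ)⁻¹ • eVec n := by
  have : (sin θ)⁻¹ = cot θ * cos θ + sin θ := by
    have := Real.sin_sq_add_cos_sq θ
    rw [Real.cot_eq_cos_div_sin]; field_simp; linarith
  rw [this, conormal, sphNormal]; module

lemma bdry_nu_e {θ : ℝ} {ξ : Euc n} (hξ : ξ ∈ capBdry n θ) :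
    ⟪sphNormal n θ ξ, eVec n⟫ = -cos θ := by
  rw [sphNormal, inner_sub_left, inner_smul_left, real_inner_self_eq_norm_sq, eVec_norm,
    eVec_inner, hξ.1]; simp

lemma xV_inner_e {θ : ℝ} (hs : 0 < sin θ) {g : Euc n → ℝ} (hbc : RobinBC n θ g) {ξ : Euc n}
    (hξ : ξ ∈ capBdry n θ) : ⟪xV n θ g ξ, eVec n⟫ = 0 := by
  have h1 := hbc ξ hξ
  have h2 := bdry_nu_e hξ
  rw [conormal_eq hs, inner_add_right, inner_smul_right, inner_smul_right, sgrad, tproj_nu hξ.2,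
    ← sgrad, Real.cot_eq_cos_div_sin] at h1
  rw [xV, inner_add_left, inner_smul_left, h2]
  field_simp at h1
  simp only [conj_trivial]; linarith

lemma bc_uF {θ : ℝ} (hc : 0 < cos θ) (hs : 0 < sin θ) {g : Euc n → ℝ}
    (hg : ContDiff ℝ (⊤ : ℕ∞) g) (hbc : RobinBC n θ g) {y : HE n} (hy : ‖y‖ = tan θ) :
    dd y (uF n θ g) y = uF n θ g y := by
  have v : OrthonormalBasis (Fin n) ℝ (HE n) :=
    (stdOrthonormalBasis ℝ (HE n)).reindex (finCongr HE_finrank)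
  have h1 := (V_eq (θ := θ) hg v y).1
  rw [sB_eq, xV_inner_e hs hbc (xiF_bdry hc hy)] at h1
  linarith

lemma bdry_tproj {θ : ℝ} (hc : 0 < cos θ) (hs : 0 < sin θ) {y : HE n} (hy : ‖y‖ = tan θ) :
    tproj n θ (xiF n θ y) (y : Euc n) = sin θ • conormal n θ (xiF n θ y) := by
  have h0 := nu_norm θ y
  have e : (y : Euc n) = ‖Yv n y‖ • sphNormal n θ (xiF n θ y) + eVec n := by
    rw [← Yv_eq]; simp [Yv]
  have h1 : sin θ * cot θ = cos θ := by rw [Real.cot_eq_cos_div_sin]; field_simp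
  rw [e, tproj_apply, inner_add_right, inner_smul_right, real_inner_self_eq_norm_sq, h0,
    bdry_nu_e (xiF_bdry hc hy), conormal_eq hs, smul_add, smul_smul, smul_smul, h1,
    mul_inv_cancel₀ hs.ne']
  module

lemma conormal_norm {θ : ℝ} (hs : 0 < sin θ) {ξ : Euc n} (hξ : ξ ∈ capBdry n θ) :
    ⟪conormal n θ ξ, conormal n θ ξ⟫ = 1 := by
  have h2 := bdry_nu_e hξ
  have h3 := h2
  rw [real_inner_comm] at h3
  rw [conormal_eq hs]
  simp only [inner_add_left, inner_add_right, inner_smul_left, inner_smul_right,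
    real_inner_self_eq_norm_sq, hξ.2, eVec_norm, h2, h3, conj_trivial]
  have := Real.sin_sq_add_cos_sq θ
  rw [Real.cot_eq_cos_div_sin]; field_simp; linarith

lemma shess_smul (θ : ℝ) (g : Euc n → ℝ) (ξ X Y : Euc n) (a b : ℝ) :
    shess n θ g ξ (a • X) (b • Y) = a * b * shess n θ g ξ X Y := by
  unfold shess
  rw [map_smul, inner_smul_left, inner_smul_right, inner_smul_left, inner_smul_right]
  simp; ring

lemma bdry_uF {θ : ℝ} (hc : 0 < cos θ) (hs : 0 < sin θ) {g : Euc n → ℝ}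
    (hg : ContDiff ℝ (⊤ : ℕ∞) g) {y : HE n} (hy : ‖y‖ = tan θ) :
    dd y (dd y (uF n θ g)) y = cos θ * sin θ ^ 2 *
      (shess n θ g (xiF n θ y) (conormal n θ (xiF n θ y)) (conormal n θ (xiF n θ y))
        + g (xiF n θ y)) := by
  rw [dd_dd_uF θ hg, bdry_tproj hc hs hy, shess_smul, inner_smul_left, inner_smul_right,
    conormal_norm hs (xiF_bdry hc hy), r_eq hc hy, inv_inv]
  simp; ring

lemma capBdry_compact (θ : ℝ) : IsCompact (capBdry n θ) := by
  have hcl : IsClosed (capBdry n θ) := by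
    have h1 : IsClosed {ξ : Euc n | ξ (Fin.last n) = 0} :=
      isClosed_eq (by fun_prop) continuous_const
    have h2 : IsClosed {ξ : Euc n | ‖sphNormal n θ ξ‖ = 1} :=
      isClosed_eq (by unfold sphNormal; fun_prop) continuous_const
    exact h1.inter h2
  refine Metric.isCompact_of_isClosed_isBounded hcl ?_
  refine (Metric.isBounded_closedBall (x := cos θ • eVec n) (r := 1)).subset ?_
  intro ξ hξ
  rw [Metric.mem_closedBall, dist_eq_norm]
  exact hξ.2.le

lemma bdry_bdd (θ : ℝ) {g : Euc n → ℝ} (hg : ContDiff ℝ (⊤ : ℕ∞) g) :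
    BddAbove ((fun η => |shess n θ g η (conormal n θ η) (conormal n θ η)|) '' capBdry n θ) := by
  refine ((capBdry_compact θ).image ?_).bddAbove
  have h1 := grad_contDiff hg
  have h2 : Continuous (gradient g) := h1.continuous
  have h3 : Continuous (fderiv ℝ (gradient g)) := h1.continuous_fderiv (by simp)
  have h4 : Continuous (conormal n θ) := by unfold conormal; fun_prop
  have h5 : Continuous (sphNormal n θ) := by unfold sphNormal; fun_prop
  unfold shess
  exact ((((h3.clm_apply h4).inner h4).sub ((h2.inner h5).mul (h4.inner h4)))).abs

lemma polar_bound {E : Type} [NormedAddCommGroup E] [InnerProductSpace ℝ E] [FiniteDimensional ℝ E]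
    {u : E → ℝ} (hu : ContDiff ℝ (⊤ : ℕ∞) u) {y : E} {D : ℝ}
    (h0 : ∀ ζ, 0 ≤ dd ζ (dd ζ u) y) (hD : ∀ ζ, dd ζ (dd ζ u) y ≤ D * ‖ζ‖ ^ 2) (a b : E) :
    |dd a (dd b u) y| ≤ D * ‖a‖ * ‖b‖ := by
  have key : ∀ a b : E, ‖a‖ = 1 → ‖b‖ = 1 → |dd a (dd b u) y| ≤ D := by
    intro a b ha hb
    have ex : ∀ s : ℝ, dd (a + s • b) (dd (a + s • b) u) y =
        dd a (dd a u) y + 2 * s * dd a (dd b u) y + s ^ 2 * dd b (dd b u) y := by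
      intro s
      rw [dd_dd_eq hu, dd_dd_eq hu, dd_dd_eq hu, dd_dd_eq hu]
      have hc := congrFun (dd_comm hu a b) y
      rw [dd_dd_eq hu, dd_dd_eq hu] at hc
      simp only [map_add, map_smul, _root_.add_apply, _root_.smul_apply, smul_eq_mul]
      linear_combination (s) * hc
    have e1 := ex 1
    have e2 := ex (-1)
    have p1 := h0 (a + (1:ℝ) • b)
    have p2 := h0 (a + (-1:ℝ) • b)
    have q1 := hD a
    have q2 := hD b
    rw [ha] at q1
    rw [hb] at q2
    rw [abs_le]; constructor <;> nlinarith
  rcases eq_or_ne a 0 with rfl | ha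
  · simp [dd]
  rcases eq_or_ne b 0 with rfl | hb
  · simp [dd_dd_eq hu]
  have ha' := norm_pos_iff.2 ha
  have hb' := norm_pos_iff.2 hb
  have h1 := key (‖a‖⁻¹ • a) (‖b‖⁻¹ • b) (by rw [norm_smul]; simp [ha]) (by rw [norm_smul]; simp [hb])
  rw [dd_dd_eq hu] at h1 ⊢
  simp only [map_smul, _root_.smul_apply, smul_eq_mul] at h1
  rw [abs_mul, abs_mul, abs_of_pos (inv_pos.2 ha'), abs_of_pos (inv_pos.2 hb')] at h1
  field_simp at h1
  linarith

end finalsec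

section transfersec
open Filter Topology
variable {n : ℕ}

def Gam (n : ℕ) (θ A : ℝ) (f : Euc n → ℝ) (y : HE n) : ℝ :=
  Real.log (uF n θ f y) - A * Real.log (1 + ‖y‖ ^ 2)

lemma gam_jet {θ A m K : ℝ} (hc : 0 < cos θ) (hm : 0 < m) (hK : 0 ≤ K) {f : Euc n → ℝ}
    (hf : ContDiff ℝ (⊤ : ℕ∞) f) (hfm : ∀ ξ ∈ cap n θ, m ≤ f ξ) (hf0 : ∀ ξ ∈ cap n θ, |f ξ| ≤ K)
    (hf1 : ∀ ξ ∈ cap n θ, ‖sgrad n θ f ξ‖ ≤ K)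
    (hf2 : ∀ ξ ∈ cap n θ, ∀ X Y : Euc n, IsTangent n θ ξ X → IsTangent n θ ξ Y →
      |shess n θ f ξ X Y| ≤ K * ‖X‖ * ‖Y‖)
    {y : HE n} (hy : ‖y‖ ≤ tan θ) {ζ : HE n} (hζ : ‖ζ‖ = 1) :
    ∃ b c, Jet (fun t : ℝ => Gam n θ A f (y + t • ζ)) b c ∧
      |b| ≤ 2 * K / m + (2 * K / m) ^ 2 + 3 * |A| ∧ |c| ≤ 2 * K / m + (2 * K / m) ^ 2 + 3 * |A| := by
  have hcap := xiF_cap hc hy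
  have hν := nu_norm θ y
  have hlow := uF_lower hc hm hfm hy
  have hζ' : ‖(ζ : Euc n)‖ = 1 := hζ
  set b1 := dd ζ (uF n θ f) y with hb1
  set c1 := dd ζ (dd ζ (uF n θ f)) y with hc1
  have hB1 : |b1| ≤ 2 * K := by
    rw [hb1, dd_uF θ hf]
    refine (abs_real_inner_le_norm _ _).trans ?_
    rw [hζ', mul_one, xV]
    refine (norm_add_le _ _).trans ?_
    rw [norm_smul, hν, mul_one, Real.norm_eq_abs]
    linarith [hf0 _ hcap, hf1 _ hcap]
  have hC1 : |c1| ≤ 2 * K := by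
    rw [hc1, dd_dd_uF θ hf]
    have ht := tproj_norm_le hν (ζ : Euc n)
    rw [hζ'] at ht
    set T := tproj n θ (xiF n θ y) (ζ : Euc n) with hT
    have h1 := hf2 _ hcap T T (tproj_nu hν _) (tproj_nu hν _)
    have h2 := hf0 _ hcap
    have hr : ‖Yv n y‖⁻¹ ≤ 1 := inv_le_one_of_one_le₀ (Yv_one_le y)
    have hr0 : 0 < ‖Yv n y‖⁻¹ := inv_pos.2 (Yv_pos y)
    have hT2 : ‖T‖ * ‖T‖ ≤ 1 := by nlinarith [norm_nonneg T]
    have h3 : |shess n θ f (xiF n θ y) T T + f (xiF n θ y) * ⟪T, T⟫| ≤ 2 * K := by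
      refine (abs_add_le _ _).trans ?_
      rw [abs_mul, real_inner_self_eq_norm_sq, abs_of_nonneg (sq_nonneg ‖T‖), sq]
      have : |f (xiF n θ y)| * (‖T‖ * ‖T‖) ≤ K * 1 :=
        mul_le_mul h2 hT2 (by positivity) hK
      have h4 : K * ‖T‖ * ‖T‖ ≤ K := by nlinarith
      linarith
    rw [abs_mul, abs_of_pos hr0]
    nlinarith [abs_nonneg (shess n θ f (xiF n θ y) T T + f (xiF n θ y) * ⟪T, T⟫)]
  have J1 := line_jet (uF_contDiff θ hf) y ζ
  have J1' := J1.log (by simp only [zero_smul, add_zero]; linarith)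
  have J2 : Jet (fun t : ℝ => 1 + ‖y + t • ζ‖ ^ 2) (2 * ⟪y, ζ⟫) 2 := by
    have h1 := (Jet.affine (1 + ‖y‖ ^ 2) (2 * ⟪y, ζ⟫)).add ((Jet.affine 0 1).mul (Jet.affine 0 1))
    refine (h1.congr_val (by simp) (by simp)).congr_ev (Eventually.of_forall fun t => ?_)
    simp only
    rw [norm_add_sq_real, inner_smul_right, norm_smul, hζ, Real.norm_eq_abs, mul_pow, sq_abs]
    ring
  have hG : 0 < 1 + ‖y‖ ^ 2 := by positivity
  have J2' := J2.log (by simp only [zero_smul, add_zero]; exact hG)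
  have J := J1'.sub (J2'.const_mul A)
  simp only [zero_smul, add_zero, ← hb1, ← hc1] at J
  refine ⟨_, _, J, ?_⟩
  set U := uF n θ f y with hU
  set G := 1 + ‖y‖ ^ 2 with hGd
  set L := 2 * K / m with hL
  have hL0 : 0 ≤ L := by positivity
  have hU0 : 0 < U := by linarith
  have e1 : |b1 / U| ≤ L := by
    rw [abs_div, abs_of_pos hU0]
    exact div_le_div₀ (by linarith) hB1 hm hlow
  have e2 : |c1 / U| ≤ L := by
    rw [abs_div, abs_of_pos hU0]
    exact div_le_div₀ (by linarith) hC1 hm hlow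
  have e3 : |c1 / U - b1 ^ 2 / U ^ 2| ≤ L + L ^ 2 := by
    rw [← div_pow]
    refine (abs_sub _ _).trans ?_
    rw [abs_of_nonneg (sq_nonneg (b1 / U)), ← sq_abs (b1 / U)]
    have := pow_le_pow_left₀ (abs_nonneg _) e1 2
    linarith
  have hin : |⟪y, ζ⟫| ≤ ‖y‖ := by
    have := abs_real_inner_le_norm y ζ
    rwa [hζ, mul_one] at this
  have e4 : |2 * ⟪y, ζ⟫ / G| ≤ 1 := by
    rw [abs_div, abs_of_pos hG, div_le_one hG, abs_mul, abs_two]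
    nlinarith [sq_nonneg (‖y‖ - 1)]
  have e5 : |2 / G - (2 * ⟪y, ζ⟫) ^ 2 / G ^ 2| ≤ 3 := by
    rw [← div_pow]
    refine (abs_sub _ _).trans ?_
    rw [abs_of_nonneg (sq_nonneg (2 * ⟪y, ζ⟫ / G)), ← sq_abs (2 * ⟪y, ζ⟫ / G),
      abs_of_pos (by positivity : 0 < 2 / G)]
    have h6 := pow_le_pow_left₀ (abs_nonneg _) e4 2
    have h7 : 2 / G ≤ 2 := div_le_self (by norm_num) (by rw [hGd]; nlinarith [sq_nonneg ‖y‖])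
    linarith
  have hA := abs_nonneg A
  constructor
  · refine (abs_sub _ _).trans ?_
    rw [abs_mul]
    nlinarith [sq_nonneg L]
  · refine (abs_sub _ _).trans ?_
    rw [abs_mul]
    nlinarith [sq_nonneg L]

lemma det_uF {θ p q m₁ m₂ : ℝ} (hc : 0 < cos θ) (hm₁ : 0 < m₁) (hm₂ : 0 < m₂) {f h : Euc n → ℝ}
    (hfm : ∀ ξ ∈ cap n θ, m₁ ≤ f ξ) (hh : ContDiff ℝ (⊤ : ℕ∞) h)
    (hhm : ∀ ξ ∈ cap n θ, m₂ ≤ h ξ) (heq : SolvesEq n θ p q f h)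
    (v : OrthonormalBasis (Fin n) ℝ (HE n)) {y : HE n} (hy : ‖y‖ ≤ tan θ) :
    (hessM (uF n θ h) v y).det = Real.exp (Gam n θ (((n : ℝ) + 2 + p) / 2) f y +
      ((p - 1) * Real.log (uF n θ h y) + (((n : ℝ) + 1 - q) / 2) *
        Real.log (g2B (uF n θ h) v y + sB (uF n θ h) v y * sB (uF n θ h) v y))) := by
  have hcap := xiF_cap hc hy
  have h1 := heq _ hcap
  rw [hess_det hh v y, eqRHS, ← (V_eq (θ := θ) hh v y).2] at h1
  have hVpos : 0 < g2B (uF n θ h) v y + sB (uF n θ h) v y * sB (uF n θ h) v y := by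
    rw [(V_eq (θ := θ) hh v y).2]
    have := hhm _ hcap
    have : 0 < h (xiF n θ y) := by linarith
    positivity
  have hfp : 0 < f (xiF n θ y) := by linarith [hfm _ hcap]
  have hhp : 0 < h (xiF n θ y) := by linarith [hhm _ hcap]
  set V := g2B (uF n θ h) v y + sB (uF n θ h) v y * sB (uF n θ h) v y with hV
  have hr := Yv_pos y
  have hrn : (0:ℝ) < ‖Yv n y‖ ^ (n + 2) := by positivity
  have hd : (hessM (uF n θ h) v y).det = (f (xiF n θ y) * h (xiF n θ y) ^ (p - 1) *
      V ^ (((n : ℝ) + 1 - q) / 2)) / ‖Yv n y‖ ^ (n + 2) := by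
    rw [eq_div_iff hrn.ne', ← h1]; ring
  have hpos : 0 < (f (xiF n θ y) * h (xiF n θ y) ^ (p - 1) *
      V ^ (((n : ℝ) + 1 - q) / 2)) / ‖Yv n y‖ ^ (n + 2) := by positivity
  rw [hd, ← Real.exp_log hpos]
  congr 1
  rw [Real.log_div (by positivity) (by positivity), Real.log_mul (by positivity) (by positivity),
    Real.log_mul (by positivity) (by positivity), Real.log_rpow hhp, Real.log_rpow hVpos,
    Real.log_pow, Gam, uF, uF, Real.log_mul hr.ne' hfp.ne', Real.log_mul hr.ne' hhp.ne', ← Yv_sq,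
    Real.log_pow]
  push_cast; ring

lemma exists_chart {θ : ℝ} (hc : 0 < cos θ) (hs : 0 < sin θ) {ξ : Euc n} (hξ : ξ ∈ cap n θ) :
    ∃ y : HE n, ‖y‖ ≤ tan θ ∧ xiF n θ y = ξ ∧ ∀ X, IsTangent n θ ξ X →
      ∃ ζ : HE n, tproj n θ ξ (ζ : Euc n) = X ∧ ‖ζ‖ ≤ (1 + (cos θ)⁻¹) * ‖X‖ := by
  set ν := sphNormal n θ ξ with hν
  have hν1 : ‖ν‖ = 1 := hξ.2
  set a := -⟪ν, eVec n⟫ with ha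
  have hac : cos θ ≤ a := by
    rw [ha, hν, sphNormal, inner_sub_left, inner_smul_left, real_inner_self_eq_norm_sq, eVec_norm,
      eVec_inner]
    have := hξ.1
    simp; linarith
  have ha0 : 0 < a := by linarith
  have hνe : ⟪ν, eVec n⟫ = -a := by rw [ha]; ring
  have hmem : ⟪a⁻¹ • ν + eVec n, eVec n⟫ = 0 := by
    rw [inner_add_left, inner_smul_left, hνe, real_inner_self_eq_norm_sq, eVec_norm]
    simp; field_simp; ring
  let y : HE n := ⟨a⁻¹ • ν + eVec n, HE_mem hmem⟩
  have hY : Yv n y = a⁻¹ • ν := by simp [Yv, y]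
  have hYn : ‖Yv n y‖ = a⁻¹ := by
    rw [hY, norm_smul, hν1, mul_one, Real.norm_eq_abs, abs_of_pos (inv_pos.2 ha0)]
  refine ⟨y, ?_, ?_, ?_⟩
  · have h1 := Yv_sq y
    rw [hYn] at h1
    have h2 : 1 + tan θ ^ 2 = ((cos θ)⁻¹) ^ 2 := by
      have := Real.sin_sq_add_cos_sq θ
      rw [Real.tan_eq_sin_div_cos]; field_simp; linarith
    have h3 : a⁻¹ ≤ (cos θ)⁻¹ := inv_anti₀ hc hac
    have h4 := pow_le_pow_left₀ (inv_pos.2 ha0).le h3 2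
    have ht : 0 < tan θ := by rw [Real.tan_eq_sin_div_cos]; positivity
    exact (sq_le_sq₀ (norm_nonneg _) ht.le).1 (by linarith)
  · rw [xiF, hYn, hY, smul_smul, inv_inv, mul_inv_cancel₀ ha0.ne', one_smul, hν, sphNormal]
    simp
  · intro X hX
    have hX' : ⟪X, ν⟫ = 0 := hX
    have hm : ⟪X + (⟪X, eVec n⟫ / a) • ν, eVec n⟫ = 0 := by
      rw [inner_add_left, inner_smul_left, hνe]
      simp; field_simp; ring
    refine ⟨⟨_, HE_mem hm⟩, ?_, ?_⟩
    · rw [tproj_apply, ← hν]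
      simp only
      rw [inner_add_right, inner_smul_right, real_inner_self_eq_norm_sq, hν1, real_inner_comm X ν, hX']
      simp
    · rw [Submodule.coe_norm]
      simp only
      refine (norm_add_le _ _).trans ?_
      rw [norm_smul, hν1, mul_one, Real.norm_eq_abs, abs_div, abs_of_pos ha0]
      have h1 := abs_real_inner_le_norm X (eVec n)
      rw [eVec_norm, mul_one] at h1
      have h2 : |⟪X, eVec n⟫| / a ≤ ‖X‖ / cos θ := div_le_div₀ (norm_nonneg _) h1 hc hac
      rw [div_eq_mul_inv ‖X‖] at h2
      linarith

end transfersec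

/-- Lemma 4.1, Step 1: reduction of the global Hessian bound to the
boundary double normal estimate:
`max_{C_θ} |∇²h| ≤ C·max_{∂C_θ}|∇²h(μ,μ)| + C`, with `C` depending only on `n`, `p`, `q`,
lower bounds for `f` and `h`, `‖f‖_{C²(C_θ)}` and `‖h‖_{C⁰(C_θ)}`. -/
theorem C2_estimate_reduction_to_double_normal
    (n : ℕ) (hn : 1 ≤ n) (θ p q : ℝ) (hθ : θ ∈ Set.Ioo 0 (π / 2)) (hpq : q < p)
    (m₁ m₂ K₁ K₂ : ℝ) (hm₁ : 0 < m₁) (hm₂ : 0 < m₂) :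
    ∃ C : ℝ, 0 < C ∧
      ∀ f h : Euc n → ℝ,
        ContDiff ℝ (⊤ : ℕ∞) f → (∀ ξ ∈ cap n θ, 0 < f ξ) →
        (∀ ξ ∈ cap n θ, m₁ ≤ f ξ) → CTwoNormLe n θ f K₁ →
        ContDiff ℝ (⊤ : ℕ∞) h → PosOnCap n θ h →
        (∀ ξ ∈ cap n θ, m₂ ≤ h ξ) → CZeroNormLe n θ h K₂ →
        IsConvexSol n θ h → SolvesEq n θ p q f h → RobinBC n θ h →
        ∀ ξ ∈ cap n θ, ∀ X Y : Euc n, IsTangent n θ ξ X → IsTangent n θ ξ Y →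
          |shess n θ h ξ X Y| ≤
            (C * sSup ((fun η => |shess n θ h η (conormal n θ η) (conormal n θ η)|) ''
                capBdry n θ) + C) * ‖X‖ * ‖Y‖ := by
  have hs : 0 < sin θ := Real.sin_pos_of_pos_of_lt_pi hθ.1 (by linarith [hθ.2, Real.pi_pos])
  have hc : 0 < cos θ := Real.cos_pos_of_mem_Ioo ⟨by linarith [hθ.1, Real.pi_pos], hθ.2⟩
  have hR : 0 < tan θ := by rw [Real.tan_eq_sin_div_cos]; positivity
  set L₁ := |K₁| + 1 with hL₁
  set L₂ := |K₂| + 1 with hL₂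
  have hL₁0 : 0 < L₁ := by positivity
  have hL₂0 : 0 < L₂ := by positivity
  have hKL₁ : K₁ ≤ L₁ := by linarith [le_abs_self K₁]
  have hKL₂ : K₂ ≤ L₂ := by linarith [le_abs_self K₂]
  set ρ := (cos θ)⁻¹ with hρ
  have hρ0 : 0 < ρ := by positivity
  set A := ((n : ℝ) + 2 + p) / 2 with hA
  set K0 := 2 * L₁ / m₁ + (2 * L₁ / m₁) ^ 2 + 3 * |A| with hK0
  obtain ⟨C, hC, hflat⟩ := flat_bound n hn (tan θ) (p - 1) (((n : ℝ) + 1 - q) / 2) m₂ (ρ * L₂) K0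
    hR hm₂ (by positivity) (by positivity)
  set B := ρ * (1 + ρ) ^ 2 * C with hB
  have hB0 : 0 < B := by positivity
  refine ⟨B * (1 + L₂) + L₂, by positivity, ?_⟩
  intro f h hf _ hfm hfC hh _ hhm hhC hcv heq hbc ξ hξ X Y hX hY
  set S := sSup ((fun η => |shess n θ h η (conormal n θ η) (conormal n θ η)|) '' capBdry n θ) with hS
  have hS0 : 0 ≤ S := by
    apply Real.sSup_nonneg
    rintro _ ⟨η, _, rfl⟩
    exact abs_nonneg _
  have hSb : ∀ η ∈ capBdry n θ, shess n θ h η (conormal n θ η) (conormal n θ η) ≤ S := by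
    intro η hη
    refine (le_abs_self _).trans ?_
    exact le_csSup (bdry_bdd θ hh) ⟨η, hη, rfl⟩
  have hhL : ∀ η ∈ cap n θ, |h η| ≤ L₂ := fun η hη => (hhC η hη).trans hKL₂
  have hu := uF_contDiff θ hh
  have hsol : FlatSol n (tan θ) (p - 1) (((n : ℝ) + 1 - q) / 2) m₂ (ρ * L₂) K0 (S + L₂)
      (uF n θ h) (Gam n θ A f) := by
    refine ⟨hu, fun y hy => uF_lower hc hm₂ hhm hy, ?_, fun y hy ζ hζ => conv_uF hc hh hcv hy hζ,
      fun y hy => bc_uF hc hs hh hbc hy, ?_,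
      fun v y hy => det_uF hc hm₁ hm₂ hfm hh hhm heq v hy.le, ?_⟩
    · intro y hy
      have h1 := r_le hc hy
      have h2 := (le_abs_self _).trans (hhL _ (xiF_cap hc hy))
      have h3 := hhm _ (xiF_cap hc hy)
      unfold uF
      exact mul_le_mul h1 h2 (by linarith) hρ0.le
    · intro y hy ζ hζ
      refine gam_jet hc hm₁ hL₁0.le hf hfm (fun η hη => (hfC.1.1 η hη).trans hKL₁)
        (fun η hη => (hfC.1.2 η hη).trans hKL₁) ?_ hy.le hζ
      intro η hη X Y hX hY
      refine (hfC.2 η hη X Y hX hY).trans ?_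
      gcongr
    · intro y hy
      rw [bdry_uF hc hs hh hy, Real.tan_eq_sin_div_cos]
      have hb := xiF_bdry hc hy
      have h1 := hSb _ hb
      have h2 := (le_abs_self _).trans (hhL _ (xiF_cap hc hy.le))
      have h3 : cos θ * sin θ ^ 2 ≤ (sin θ / cos θ) ^ 2 := by
        rw [div_pow, le_div_iff₀ (by positivity)]
        have : cos θ ^ 3 ≤ 1 := pow_le_one₀ hc.le (Real.cos_le_one θ)
        nlinarith [sq_nonneg (sin θ)]
      calc _ ≤ cos θ * sin θ ^ 2 * (S + L₂) := by gcongr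
        _ ≤ (sin θ / cos θ) ^ 2 * (S + L₂) := by gcongr
        _ = _ := by ring
  have hfin := hflat (HE n) HE_finrank _ _ (S + L₂) (by positivity) hsol
  obtain ⟨y, hy, hyξ, hlift⟩ := exists_chart hc hs hξ
  obtain ⟨ζ, hζ, hζn⟩ := hlift X hX
  obtain ⟨ζ', hζ', hζn'⟩ := hlift Y hY
  have h0 : ∀ z : HE n, 0 ≤ dd z (dd z (uF n θ h)) y := by
    intro z
    rcases eq_or_ne z 0 with rfl | hz
    · simp [dd]
    · exact (conv_uF hc hh hcv hy hz).le
  have hpol := polar_bound hu h0 (hfin y hy) ζ ζ'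
  have hdd := dd_dd_uF θ hh ζ ζ' y
  rw [hyξ, hζ, hζ'] at hdd
  have hr := Yv_pos y
  have hrρ := r_le hc hy
  have hsh : shess n θ h ξ X Y = ‖Yv n y‖ * dd ζ (dd ζ' (uF n θ h)) y - h ξ * ⟪X, Y⟫ := by
    rw [hdd]; field_simp; ring
  have h1 : |‖Yv n y‖ * dd ζ (dd ζ' (uF n θ h)) y| ≤
      ρ * (C * (1 + (S + L₂)) * ((1 + ρ) * ‖X‖) * ((1 + ρ) * ‖Y‖)) := by
    rw [abs_mul, abs_of_pos hr]
    refine mul_le_mul hrρ (hpol.trans ?_) (abs_nonneg _) hρ0.le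
    gcongr
  have h2 : |h ξ * ⟪X, Y⟫| ≤ L₂ * (‖X‖ * ‖Y‖) := by
    rw [abs_mul]
    exact mul_le_mul (hhL ξ hξ) (abs_real_inner_le_norm X Y) (abs_nonneg _) hL₂0.le
  rw [hsh]
  refine (abs_sub _ _).trans ((add_le_add h1 h2).trans ?_)
  have h3 : 0 ≤ (B * L₂ * S + L₂ * S) * (‖X‖ * ‖Y‖) := by positivity
  have h4 : ρ * (C * (1 + (S + L₂)) * ((1 + ρ) * ‖X‖) * ((1 + ρ) * ‖Y‖)) =
      B * (1 + (S + L₂)) * (‖X‖ * ‖Y‖) := by rw [hB]; ring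
  rw [h4]
  nlinarith
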